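/- arXiv:0911.0445 — 4 statements merged into one kernel-verified Lean document; each statement's English description precedes it below -/
import Mathlib

section
/- Let n ≥ 47 and let G be a primitive subgroup of S_n that does not contain the alternating group A_n. Then G does not have the universal transversal property. -/
/-!
Suppose `G` has the universal transversal property, and let `f` be the largest number of points
fixed by a nonidentity element of `G`.

*Upper bound for `f`.* If `g ∈ G` has support `S` with `2 |S| ≤ n + 1`, the property applied to `S`
and a partition with `S` as a class produces a conjugate of `g` whose support meets `S` in a single
point. The commutator of the two is a 3-cycle, so `A_n ≤ G` by Jordan's theorem. Hence
`2 f + 2 ≤ n` (`lt_card_support_of_mem`).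

*Lower bound for `f`.* Every `r`-set lies in a `G`-translate of a fixed `(r+1)`-set, so
`n.choose r ≤ |G| (r + 1)`; on the other hand `|G| ≤ n (n - 1) ⋯ (n - f)`. With `r = ⌊n / 2⌋` this
gives `f ≥ 7` and, roughly, `f ≥ n / log₂ n`.

*Multiple transitivity.* For an `(f-2)`-set `A`, join two points `x`, `y` outside `A` if some
nonidentity element of `G` fixes `A + x + y`. By the universal transversal property this graph has
an edge across every cut (`Setup.cut`). A counting argument shows that its edges at a given vertex `x`
go to a single orbit of the stabilizer of `A + x` (`Setup.orb_of_nt`). It follows that the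
stabilizers of sets with at most `f - 2` points have at most two orbits outside the set, and then
that they are transitive there: `G` is `(f-1)`-transitive (`Setup.sTrans`).

*Large degree.* If `n ≥ 256`, some `g ∈ G` acts on an `(f-1)`-set with cycles of three coprime
prime power lengths whose product exceeds `n - f + 1`. The powers of `g` of the three prime orders
have together at least `n + f - 1 > 3 f` fixed points, counted with multiplicity, although each has
at most `f` (`Setup.three_primes`).

*Small degree.* If `n < 256`, some prime `p` with `n / 2 < p ≤ n - 3` divides `|G|`, and
`G` induces the full symmetric group on sets of `n - p` points. By Sylow's theorem this action can
be realised in the normalizer of a `p`-cycle with that fixed point set; a commutator of two elements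
of this normalizer centralizes the `p`-cycle and induces a 3-cycle on its fixed points, so its
`p`-th power moves three points only (`false_of_prime`). In degree `55` with `p = 47` and `f = 8`, where
`n - p = f`, the order of `G` has to be used again to obtain `f`-transitivity.
-/

open Finset

/-- Transformations of a set `α`, composed left-to-right (acting on the right):
`x (a * b) = (x a) b`. -/
structure Transf (α : Type*) where
  toFun : α → α

namespace Transf

variable {α : Type*}

instance : Semigroup (Transf α) where
  mul a b := ⟨fun x => b.toFun (a.toFun x)⟩
  mul_assoc _ _ _ := rfl

/-- The transformation induced by a permutation. -/
def ofPerm (g : Equiv.Perm α) : Transf α := ⟨g⟩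

/-- The rank of a transformation: the cardinality of its image. -/
noncomputable def rank (a : Transf α) : ℕ := Set.ncard (Set.range a.toFun)

end Transf

/-- The subsemigroup `⟨G, a⟩` generated by `G ∪ {a}`. -/
def genGA {α : Type*} (G : Subgroup (Equiv.Perm α)) (a : Transf α) :
    Subsemigroup (Transf α) :=
  Subsemigroup.closure (insert a (Transf.ofPerm '' (G : Set (Equiv.Perm α))))

/-- The set `⟨G, a⟩ ∖ G`. -/
def genGAminusG {α : Type*} (G : Subgroup (Equiv.Perm α)) (a : Transf α) :
    Set (Transf α) :=
  (genGA G a : Set (Transf α)) \ (Transf.ofPerm '' (G : Set (Equiv.Perm α)))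

/-- The set of conjugates `a^g = g⁻¹ a g` with `g ∈ G`. -/
def conjSet {α : Type*} (G : Subgroup (Equiv.Perm α)) (a : Transf α) : Set (Transf α) :=
  (fun g : Equiv.Perm α => Transf.ofPerm g⁻¹ * a * Transf.ofPerm g) '' (G : Set (Equiv.Perm α))

/-- The subsemigroup `⟨a^g | g ∈ G⟩`. -/
def genConj {α : Type*} (G : Subgroup (Equiv.Perm α)) (a : Transf α) :
    Subsemigroup (Transf α) :=
  Subsemigroup.closure (conjSet G a)

/-- A subset of the transformation semigroup is regular if every element `u` of it
admits `v` in the set with `u = u v u`. -/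
def IsRegularSet {α : Type*} (S : Set (Transf α)) : Prop :=
  ∀ u ∈ S, ∃ v ∈ S, u * v * u = u

/-- A subset of the transformation semigroup is idempotent generated if it coincides with
the subsemigroup generated by its idempotent elements. -/
def IsIdemGen {α : Type*} (S : Set (Transf α)) : Prop :=
  S = ↑(Subsemigroup.closure {u | u ∈ S ∧ u * u = u})

/-- `T` is a transversal for the partition `P`: it meets each class in exactly one point. -/
def IsTransversal {α : Type*} [DecidableEq α] [Fintype α] (T : Finset α)
    (P : Finpartition (Finset.univ : Finset α)) : Prop :=
  ∀ p ∈ P.parts, (T ∩ p).card = 1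

/-- The universal transversal property: for every subset `I` and every partition `P`
with exactly `|I|` classes, some `G`-translate of `I` is a transversal for `P`. -/
def HasUTP {α : Type*} [DecidableEq α] [Fintype α] (G : Subgroup (Equiv.Perm α)) : Prop :=
  ∀ (I : Finset α) (P : Finpartition (Finset.univ : Finset α)),
    P.parts.card = I.card → ∃ g ∈ G, IsTransversal (I.image ⇑g) P

set_option linter.unusedSectionVars false

/-! ### The universal transversal property, blocks, and 3-cycles -/

section Basics

open Equiv

variable {α : Type*} [Fintype α] [DecidableEq α]

theorem perm_apply_inv {β : Type*} (g : Perm β) (x : β) : g (g⁻¹ x) = x := g.apply_symm_apply x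

theorem perm_inv_apply {β : Type*} (g : Perm β) (x : β) : g⁻¹ (g x) = x := g.symm_apply_apply x

/-- The universal transversal property in terms of colourings: if `c` uses exactly `|I|` colours, some
`g ∈ G` maps `I` bijectively onto the colours. -/
theorem HasUTP.coloring {G : Subgroup (Perm α)} (h : HasUTP G) {β : Type*} [DecidableEq β]
    (I : Finset α) (c : α → β) (hc : (univ.image c).card = I.card) :
    ∃ g ∈ G, (∀ x, ∃ i ∈ I, c (g i) = c x) ∧
      ∀ i ∈ I, ∀ j ∈ I, c (g i) = c (g j) → i = j := by
  classical
  let P : Finpartition (univ : Finset α) := Finpartition.ofSetoid (Setoid.ker c)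
  have hpart : ∀ x, P.part x ∈ P.parts := fun x => P.part_mem.2 (mem_univ x)
  have hmem : ∀ x y, y ∈ P.part x ↔ c x = c y := by
    intro x y
    exact Finpartition.mem_part_ofSetoid_iff_rel
  have hcard : P.parts.card = I.card := by
    rw [← hc]
    symm
    refine Finset.card_bij (fun b _ => univ.filter (fun y => c y = b)) ?_ ?_ ?_
    · intro b hb
      obtain ⟨x, -, rfl⟩ := mem_image.1 hb
      have : univ.filter (fun y => c y = c x) = P.part x := by
        ext y; rw [hmem]; simp [eq_comm]
      rw [this]; exact hpart x
    · intro b hb b' hb' hbb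
      obtain ⟨x, -, rfl⟩ := mem_image.1 hb
      have : x ∈ univ.filter (fun y => c y = c x) := by simp
      rw [hbb] at this
      simpa using this
    · intro p hp
      obtain ⟨x, hx⟩ := P.nonempty_of_mem_parts hp
      refine ⟨c x, by simp, ?_⟩
      have : p = P.part x := (P.part_eq_of_mem hp hx).symm
      rw [this]
      ext y; rw [hmem]; simp [eq_comm]
  obtain ⟨g, hg, ht⟩ := h I P hcard
  have key : ∀ x, ∃ z, I.image g ∩ P.part x = {z} := fun x =>
    card_eq_one.1 (ht _ (hpart x))
  refine ⟨g, hg, fun x => ?_, fun i hi j hj hij => ?_⟩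
  · obtain ⟨z, hz⟩ := key x
    have : z ∈ I.image g ∩ P.part x := by rw [hz]; simp
    rw [mem_inter, mem_image, hmem] at this
    obtain ⟨⟨i, hi, rfl⟩, h2⟩ := this
    exact ⟨i, hi, h2.symm⟩
  · obtain ⟨z, hz⟩ := key (g i)
    have h1 : g i ∈ I.image g ∩ P.part (g i) := by
      rw [mem_inter, hmem]; exact ⟨mem_image_of_mem _ hi, rfl⟩
    have h2 : g j ∈ I.image g ∩ P.part (g i) := by
      rw [mem_inter, hmem]; exact ⟨mem_image_of_mem _ hj, hij⟩
    rw [hz, mem_singleton] at h1 h2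
    exact g.injective (h1.trans h2.symm)

open scoped Pointwise in
/-- The translates of a nonempty block form an invariant partition, so primitivity in terms of
partitions implies primitivity in terms of blocks. -/
theorem isPreprimitive_of_partitions (G : Subgroup (Perm α))
    (htrans : ∀ x y : α, ∃ g ∈ G, g x = y)
    (hprim : ∀ P : Finpartition (Finset.univ : Finset α),
      (∀ g ∈ G, ∀ p ∈ P.parts, p.image ⇑g ∈ P.parts) →
      P.parts.card = 1 ∨ ∀ p ∈ P.parts, p.card = 1) : MulAction.IsPreprimitive G α := by
  classical
  have : MulAction.IsPretransitive G α := ⟨fun x y => by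
    obtain ⟨g, hg, h⟩ := htrans x y
    exact ⟨⟨g, hg⟩, h⟩⟩
  constructor
  intro B hB
  rcases B.eq_empty_or_nonempty with rfl | ⟨b, hb⟩
  · left; exact Set.subsingleton_empty
  let B' : Finset α := univ.filter (· ∈ B)
  have hB' : ∀ x, x ∈ B' ↔ x ∈ B := fun x => by simp [B']
  have hblock : ∀ g h : Perm α, g ∈ G → h ∈ G → (∃ x ∈ B'.image g, x ∈ B'.image h) →
      B'.image g = B'.image h := by
    rintro g h hg hh ⟨x, hx1, hx2⟩
    have hs : (⟨g, hg⟩ : G) • B = (⟨h, hh⟩ : G) • B := by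
      apply hB.smul_eq_smul_of_nonempty
      obtain ⟨u, hu, rfl⟩ := mem_image.1 hx1
      obtain ⟨v, hv, hvu⟩ := mem_image.1 hx2
      exact ⟨g u, ⟨u, (hB' u).1 hu, rfl⟩, ⟨v, (hB' v).1 hv, hvu⟩⟩
    ext y
    have := Set.ext_iff.1 hs y
    simp only [mem_image, hB']
    exact this
  let P : Finpartition (univ : Finset α) :=
    { parts := (univ.filter (fun g : Perm α => g ∈ G)).image (fun g : Perm α => B'.image g)
      supIndep := by
        rw [Finset.supIndep_iff_pairwiseDisjoint]
        intro p hp q hq hpq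
        simp only [coe_image, Set.mem_image, mem_coe, mem_filter, mem_univ, true_and] at hp hq
        obtain ⟨g, hg, rfl⟩ := hp
        obtain ⟨h, hh, rfl⟩ := hq
        rw [Function.onFun, id, id, Finset.disjoint_left]
        intro x hx hx'
        exact hpq (hblock g h hg hh ⟨x, hx, hx'⟩)
      sup_parts := by
        ext x
        obtain ⟨g, hg, hgx⟩ := htrans b x
        simp only [mem_sup, mem_univ, iff_true]
        exact ⟨_, mem_image_of_mem _ (mem_filter.2 ⟨mem_univ g, hg⟩),
          mem_image.2 ⟨b, (hB' b).2 hb, hgx⟩⟩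
      bot_notMem := by
        simp only [bot_eq_empty, mem_image, image_eq_empty, not_exists, not_and]
        rintro g - h
        have := (hB' b).2 hb
        rw [h] at this; simp at this }
  have hBP : B' ∈ P.parts := mem_image.2 ⟨1, by simp [G.one_mem], by ext; simp⟩
  rcases hprim P (by
    intro g hg p hp
    obtain ⟨h, hh, rfl⟩ := mem_image.1 hp
    refine mem_image.2 ⟨g * h, by simpa using G.mul_mem hg (by simpa using hh), ?_⟩
    ext; simp) with h1 | h1
  · right
    obtain ⟨q, hq⟩ := card_eq_one.1 h1
    ext x
    simp only [Set.mem_univ, iff_true]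
    have hx := P.part_mem.2 (mem_univ x)
    have hx2 := P.mem_part (mem_univ x)
    rw [hq, mem_singleton] at hx hBP
    rw [hx, ← hBP, hB'] at hx2
    exact hx2
  · left
    obtain ⟨q, hq⟩ := card_eq_one.1 (h1 B' hBP)
    intro x hx y hy
    have hx' := (hB' x).2 hx
    have hy' := (hB' y).2 hy
    rw [hq, mem_singleton] at hx' hy'
    exact hx'.trans hy'.symm

/-- The commutator of two permutations whose supports meet in one point is a 3-cycle. -/
theorem isThreeCycle_of_inter (g k : Perm α) (a : α) (hg : g a ≠ a) (hk : k a ≠ a)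
    (h : ∀ x, g x ≠ x → k x ≠ x → x = a) : (g * k * g⁻¹ * k⁻¹).IsThreeCycle := by
  have hgk : k (g a) = g a := by
    by_contra hc
    have := h (g a) (fun h' => hg (g.injective h')) hc
    exact hg this
  have hkg : g (k a) = k a := by
    by_contra hc
    have := h (k a) hc (fun h' => hk (k.injective h'))
    exact hk this
  have hne : g a ≠ k a := by
    intro h'
    rw [h'] at hgk
    exact hk (k.injective hgk)
  have heq : g * k * g⁻¹ * k⁻¹ = swap a (k a) * swap a (g a) := by
    ext x
    simp only [Perm.mul_apply]
    have hginv : ∀ y, g y = y → g⁻¹ y = y := fun y hy => by rw [Perm.inv_eq_iff_eq, hy]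
    have hkinv : ∀ y, k y = y → k⁻¹ y = y := fun y hy => by rw [Perm.inv_eq_iff_eq, hy]
    by_cases hxa : x = a
    · subst hxa
      have h1 : g (k⁻¹ x) = k⁻¹ x := by
        by_contra hc
        have h2 := h _ hc (by
          rw [perm_apply_inv]; intro h3; exact hk (Perm.eq_inv_iff_eq.1 h3))
        exact hk (by rw [Perm.inv_eq_iff_eq] at h2; exact h2.symm)
      rw [hginv _ h1, perm_apply_inv, swap_apply_left,
        swap_apply_of_ne_of_ne hg hne]
    by_cases hxg : x = g a
    · subst hxg
      rw [hkinv _ hgk, perm_inv_apply, hkg, swap_apply_right, swap_apply_left]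
    by_cases hxk : x = k a
    · subst hxk
      have h1 : k (g⁻¹ a) = g⁻¹ a := by
        by_contra hc
        have h2 := h _ (by
          rw [perm_apply_inv]; intro h3; exact hg (Perm.eq_inv_iff_eq.1 h3)) hc
        exact hg (by rw [Perm.inv_eq_iff_eq] at h2; exact h2.symm)
      rw [perm_inv_apply, h1, perm_apply_inv, swap_apply_of_ne_of_ne hxa hne.symm,
        swap_apply_right]
    rw [swap_apply_of_ne_of_ne hxa hxg, swap_apply_of_ne_of_ne hxa hxk]
    by_cases hkx : k x = x
    · rw [hkinv _ hkx]
      have h1 : k (g⁻¹ x) = g⁻¹ x := by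
        by_contra hc
        by_cases h3 : g x = x
        · rw [hginv _ h3] at hc; exact hc hkx
        · have h2 := h _ (by
            rw [perm_apply_inv]; intro h4; exact h3 (by rw [Perm.eq_inv_iff_eq] at h4; exact h4)) hc
          exact hxg (by rw [Perm.inv_eq_iff_eq] at h2; exact h2)
      rw [h1, perm_apply_inv]
    · have hgx : g x = x := by
        by_contra hc
        exact hxa (h x hc hkx)
      have h1 : g (k⁻¹ x) = k⁻¹ x := by
        by_contra hc
        have h2 := h _ hc (by
          rw [perm_apply_inv]; intro h4; exact hkx (by rw [Perm.eq_inv_iff_eq] at h4; exact h4))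
        exact hxk (by rw [Perm.inv_eq_iff_eq] at h2; exact h2)
      rw [hginv _ h1, perm_apply_inv, hgx]
  rw [heq]
  exact Perm.isThreeCycle_swap_mul_swap_same hk.symm hg.symm hne.symm

/-- If `g` has small support `S`, the universal transversal property for `S` and a partition having `S`
as a class gives a conjugate of `g` whose support meets `S` in one point, hence a 3-cycle in `G`. -/
theorem lt_card_support_of_mem {G : Subgroup (Perm α)} (hprim : MulAction.IsPreprimitive G α)
    (hA : ¬ alternatingGroup α ≤ G) (hU : HasUTP G) {g : Perm α} (hg : g ∈ G) (hg1 : g ≠ 1) :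
    Fintype.card α + 1 < 2 * g.support.card := by
  by_contra! hle
  set S := g.support with hS
  -- one class is `S`; the points outside `S` are divided into `|S| - 1` classes represented by `W`
  have hm : 2 ≤ S.card := Perm.two_le_card_support_of_ne_one hg1
  have hcompl : S.card - 1 ≤ (Sᶜ).card := by rw [card_compl]; omega
  obtain ⟨W, hWS, hWc⟩ := exists_subset_card_eq hcompl
  obtain ⟨w0, hw0⟩ : W.Nonempty := card_pos.1 (by omega)
  obtain ⟨s0, hs0⟩ : S.Nonempty := card_pos.1 (by omega)
  have hWS' : ∀ w ∈ W, w ∉ S := fun w hw => mem_compl.1 (hWS hw)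
  let c : α → α := fun x => if x ∈ S then s0 else if x ∈ W then x else w0
  have hcS : ∀ x ∈ S, c x = s0 := fun x hx => by simp [c, hx]
  have hcW : ∀ x ∈ W, c x = x := fun x hx => by simp [c, hWS' x hx, hx]
  have hcN : ∀ x, x ∉ S → c x ∈ W := fun x hx => by
    simp only [c, hx, if_false]; split_ifs with h <;> assumption
  have him : univ.image c = insert s0 W := by
    ext x
    simp only [mem_image, mem_univ, true_and, mem_insert]
    constructor
    · rintro ⟨y, rfl⟩
      by_cases hy : y ∈ S
      · left; exact hcS y hy
      · right; exact hcN y hy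
    · rintro (rfl | hx)
      · exact ⟨x, hcS x hs0⟩
      · exact ⟨x, hcW x hx⟩
  have hs0W : s0 ∉ W := fun h => hWS' s0 h hs0
  obtain ⟨h, hh, h1, h2⟩ := hU.coloring S c (by
    rw [him, card_insert_of_notMem hs0W]; omega)
  have hcs : ∀ x, c x = s0 → x ∈ S := fun x hx => by
    by_contra hxS; exact hs0W (hx ▸ hcN x hxS)
  obtain ⟨i, hi, hci⟩ := h1 s0
  rw [hcS s0 hs0] at hci
  have h3 : (g * (h * g * h⁻¹) * g⁻¹ * (h * g * h⁻¹)⁻¹).IsThreeCycle := by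
    refine isThreeCycle_of_inter g (h * g * h⁻¹) (h i) ?_ ?_ ?_
    · exact Perm.mem_support.1 (hcs _ hci)
    · simp only [Perm.mul_apply, perm_inv_apply]
      intro h'
      exact Perm.mem_support.1 hi (h.injective h')
    · intro x hx1 hx2
      have hxS : x ∈ S := Perm.mem_support.2 hx1
      have hx2' : h⁻¹ x ∈ S := by
        apply Perm.mem_support.2
        intro h'
        apply hx2
        rw [Perm.mul_apply, Perm.mul_apply, h', perm_apply_inv]
      have := h2 (h⁻¹ x) hx2' i hi (by
        rw [perm_apply_inv, hcS x hxS, hci])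
      rw [← this, perm_apply_inv]
  have hk : h * g * h⁻¹ ∈ G := G.mul_mem (G.mul_mem hh hg) (G.inv_mem hh)
  exact hA (Perm.alternatingGroup_le_of_isPreprimitive_of_isThreeCycle_mem hprim h3
    (G.mul_mem (G.mul_mem (G.mul_mem hg hk) (G.inv_mem hg)) (G.inv_mem hk)))

end Basics

/-! ### Pointwise stabilizers -/

section Stabilizers

open Equiv

variable {α : Type*} [Fintype α] [DecidableEq α]

/-- The pointwise stabilizer of the finite set `A` in the permutation group `G`. -/
def ptStab (G : Subgroup (Perm α)) (A : Finset α) : Subgroup (Perm α) where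
  carrier := {g | g ∈ G ∧ ∀ a ∈ A, g a = a}
  one_mem' := ⟨G.one_mem, fun _ _ => rfl⟩
  mul_mem' := fun {g h} hg hh => ⟨G.mul_mem hg.1 hh.1, fun a ha => by
    rw [Perm.mul_apply, hh.2 a ha, hg.2 a ha]⟩
  inv_mem' := fun {g} hg => ⟨G.inv_mem hg.1, fun a ha => by
    rw [Perm.inv_eq_iff_eq, hg.2 a ha]⟩

theorem mem_ptStab {G : Subgroup (Perm α)} {A : Finset α} {g : Perm α} :
    g ∈ ptStab G A ↔ g ∈ G ∧ ∀ a ∈ A, g a = a := Iff.rfl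

/-- `x` and `y` lie in the same orbit of the pointwise stabilizer of `A`. -/
def SOrb (G : Subgroup (Perm α)) (A : Finset α) (x y : α) : Prop :=
  ∃ g ∈ G, (∀ a ∈ A, g a = a) ∧ g x = y

/-- The pointwise stabilizer of `A` is nontrivial. -/
def Nt (G : Subgroup (Perm α)) (A : Finset α) : Prop :=
  ∃ g ∈ G, g ≠ 1 ∧ ∀ a ∈ A, g a = a

/-- The pointwise stabilizer of `A` is transitive on the complement of `A`. -/
def STrans (G : Subgroup (Perm α)) (A : Finset α) : Prop :=
  ∀ x y, x ∉ A → y ∉ A → SOrb G A x y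

variable {G : Subgroup (Perm α)} {A B : Finset α} {x y z : α}

theorem SOrb.refl (x : α) : SOrb G A x x := ⟨1, G.one_mem, fun _ _ => rfl, rfl⟩

theorem SOrb.symm (h : SOrb G A x y) : SOrb G A y x := by
  obtain ⟨g, hg, ha, rfl⟩ := h
  exact ⟨g⁻¹, G.inv_mem hg, fun a h => by rw [Perm.inv_eq_iff_eq, ha a h], perm_inv_apply g x⟩

theorem SOrb.trans (h : SOrb G A x y) (h' : SOrb G A y z) : SOrb G A x z := by
  obtain ⟨g, hg, ha, rfl⟩ := h
  obtain ⟨k, hk, hb, rfl⟩ := h'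
  exact ⟨k * g, G.mul_mem hk hg, fun a h => by rw [Perm.mul_apply, ha a h, hb a h], rfl⟩

theorem SOrb.mono (hAB : A ⊆ B) (h : SOrb G B x y) : SOrb G A x y := by
  obtain ⟨g, hg, ha, h⟩ := h
  exact ⟨g, hg, fun a h => ha a (hAB h), h⟩

theorem SOrb.of_insert {w : α} (h : SOrb G (insert w A) x y) : SOrb G A x y :=
  h.mono (subset_insert _ _)

theorem SOrb.notMem (h : SOrb G A x y) (hx : x ∉ A) : y ∉ A := by
  obtain ⟨g, hg, ha, rfl⟩ := h
  intro hy
  exact hx (by have := g.injective (ha _ hy); rwa [this] at hy)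

theorem Nt.mono (hAB : A ⊆ B) (h : Nt G B) : Nt G A := by
  obtain ⟨g, hg, h1, ha⟩ := h
  exact ⟨g, hg, h1, fun a h => ha a (hAB h)⟩

theorem Nt.image (h : Nt G A) {k : Perm α} (hk : k ∈ G) : Nt G (A.image k) := by
  obtain ⟨g, hg, h1, ha⟩ := h
  refine ⟨k * g * k⁻¹, G.mul_mem (G.mul_mem hk hg) (G.inv_mem hk), fun h => h1 ?_, ?_⟩
  · rwa [mul_inv_eq_one, mul_eq_left] at h
  · intro b hb
    obtain ⟨a, haA, rfl⟩ := mem_image.1 hb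
    rw [Perm.mul_apply, Perm.mul_apply, perm_inv_apply, ha a haA]

theorem SOrb.image (h : SOrb G A x y) {k : Perm α} (hk : k ∈ G) :
    SOrb G (A.image k) (k x) (k y) := by
  obtain ⟨g, hg, ha, rfl⟩ := h
  refine ⟨k * g * k⁻¹, G.mul_mem (G.mul_mem hk hg) (G.inv_mem hk), ?_, ?_⟩
  · intro b hb
    obtain ⟨a, haA, rfl⟩ := mem_image.1 hb
    rw [Perm.mul_apply, Perm.mul_apply, perm_inv_apply, ha a haA]
  · rw [Perm.mul_apply, Perm.mul_apply, perm_inv_apply]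

theorem image_eq_of_fix {k : Perm α} (h : ∀ a ∈ A, k a = a) : A.image k = A := by
  ext b
  rw [mem_image]
  constructor
  · rintro ⟨a, ha, rfl⟩; rwa [h a ha]
  · intro hb; exact ⟨b, hb, h b hb⟩

/-- An element of the stabilizer of `A` carrying `x` to `x'` carries a nontrivial `A + x + y`
to a nontrivial `A + x' + y'`, with `y'` in the orbit of `y`. -/
theorem Nt.transport {x' : α} (h : Nt G (insert y (insert x A))) (hr : SOrb G A x x') :
    ∃ y', SOrb G A y y' ∧ (y ≠ x → y' ≠ x') ∧ Nt G (insert y' (insert x' A)) := by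
  obtain ⟨k, hk, ha, rfl⟩ := hr
  refine ⟨k y, ⟨k, hk, ha, rfl⟩, fun h h' => h (k.injective h'), ?_⟩
  have := h.image hk
  rwa [image_insert, image_insert, image_eq_of_fix ha] at this

open Classical in
/-- Orbit-stabilizer for the pointwise stabilizers. -/
theorem card_orbit_mul (G : Subgroup (Perm α)) (A : Finset α) (x : α) :
    #{y | SOrb G A x y} * Nat.card (ptStab G (insert x A)) = Nat.card (ptStab G A) := by
  have h := MulAction.card_orbit_mul_card_stabilizer_eq_card_group (ptStab G A) x
  rw [← Nat.card_eq_fintype_card, ← Nat.card_eq_fintype_card, ← Nat.card_eq_fintype_card] at h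
  rw [← h]
  congr 1
  · rw [Nat.card_eq_card_toFinset (MulAction.orbit (ptStab G A) x)]
    congr 1
    ext y
    simp only [mem_filter, mem_univ, true_and, Set.mem_toFinset, MulAction.mem_orbit_iff]
    constructor
    · rintro ⟨g, hg, ha, h⟩
      exact ⟨⟨g, hg, ha⟩, h⟩
    · rintro ⟨⟨g, hg, ha⟩, h⟩
      exact ⟨g, hg, ha, h⟩
  · refine Nat.card_congr
      { toFun := fun g => ⟨⟨g.1, g.2.1, fun a ha => g.2.2 a (mem_insert_of_mem ha)⟩,
          g.2.2 x (mem_insert_self _ _)⟩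
        invFun := fun g => ⟨g.1.1, g.1.2.1, fun a ha => ?_⟩
        left_inv := fun g => rfl
        right_inv := fun g => rfl }
    rcases mem_insert.1 ha with rfl | ha
    · exact g.2
    · exact g.1.2.2 a ha

theorem card_ptStab_pos (G : Subgroup (Perm α)) (A : Finset α) : 0 < Nat.card (ptStab G A) :=
  Nat.card_pos

theorem card_ptStab_dvd (G : Subgroup (Perm α)) (A : Finset α) :
    Nat.card (ptStab G A) ∣ Nat.card G :=
  Subgroup.card_dvd_of_le (fun _ hg => hg.1)

open Classical in
theorem filter_rel_eq (h : SOrb G A x y) :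
    (univ.filter (fun z => SOrb G A x z)) = univ.filter (fun z => SOrb G A y z) := by
  ext z
  simp only [mem_filter, mem_univ, true_and]
  exact ⟨fun hz => h.symm.trans hz, fun hz => h.trans hz⟩

theorem card_ptStab_insert_congr (h : SOrb G A x y) :
    Nat.card (ptStab G (insert x A)) = Nat.card (ptStab G (insert y A)) := by
  classical
  have h1 := card_orbit_mul G A x
  rw [← card_orbit_mul G A y, filter_rel_eq h] at h1
  refine Nat.eq_of_mul_eq_mul_left (card_pos.2 ⟨y, ?_⟩) h1
  simpa using SOrb.refl y

open Classical in
theorem card_filter_ptStab (G : Subgroup (Perm α)) (A : Finset α) :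
    #{g | g ∈ ptStab G A} = Nat.card (ptStab G A) := by
  rw [Nat.card_eq_fintype_card, Fintype.card_subtype]

theorem one_lt_card_ptStab (h : Nt G A) : 1 < Nat.card (ptStab G A) := by
  obtain ⟨g, hg, h1, ha⟩ := h
  rw [Subgroup.one_lt_card_iff_ne_bot, Subgroup.ne_bot_iff_exists_ne_one]
  exact ⟨⟨g, hg, ha⟩, fun h => h1 (congrArg Subtype.val h)⟩

theorem card_ptStab_eq_one (h : ¬ Nt G A) : Nat.card (ptStab G A) = 1 := by
  rw [Subgroup.card_eq_one, eq_bot_iff]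
  intro g hg
  by_contra hc
  exact h ⟨g, hg.1, hc, hg.2⟩

/-- Orbit-stabilizer along `A`: the index of the stabilizer of `k` points is at most
`n (n - 1) ⋯ (n - k + 1)`. -/
theorem card_le_descFactorial (G : Subgroup (Perm α)) (A : Finset α) :
    Nat.card G ≤ (Fintype.card α).descFactorial #A * Nat.card (ptStab G A) := by
  classical
  induction A using Finset.induction_on with
  | empty =>
    simp only [card_empty, Nat.descFactorial_zero, one_mul]
    exact Nat.card_le_card_of_injective
      (fun g : G => (⟨g.1, g.2, by simp⟩ : ptStab G ∅)) (fun g h hgh => by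
        have h' := congrArg Subtype.val hgh
        exact Subtype.ext h')
  | insert x A hx ih =>
    refine ih.trans ?_
    rw [card_insert_of_notMem hx, Nat.descFactorial_succ, ← card_orbit_mul G A x,
      ← mul_assoc]
    refine Nat.mul_le_mul_right _ ?_
    rw [mul_comm]
    refine Nat.mul_le_mul_right _ ?_
    rw [← card_compl]
    refine card_le_card fun y hy => ?_
    rw [mem_compl]
    exact (mem_filter.1 hy).2.notMem hx

/-- If all orbits meeting an invariant set have size divisible by `q`, so has the set. -/
theorem dvd_card_of_orbits (G : Subgroup (Perm α)) (A : Finset α) (q : ℕ) :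
    ∀ S : Finset α, (∀ x ∈ S, ∀ y, SOrb G A x y → y ∈ S) →
      (∀ x ∈ S, ∀ O : Finset α, (∀ y, y ∈ O ↔ SOrb G A x y) → q ∣ #O) → q ∣ #S := by
  classical
  intro S
  induction S using Finset.strongInduction with
  | H S ih =>
    intro hinv hq
    rcases S.eq_empty_or_nonempty with rfl | ⟨x, hx⟩
    · simp
    let O : Finset α := univ.filter (fun y => SOrb G A x y)
    have hO : ∀ y, y ∈ O ↔ SOrb G A x y := fun y => by simp [O]
    have hOS : O ⊆ S := fun y hy => hinv x hx y ((hO y).1 hy)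
    have hxO : x ∈ O := (hO x).2 (SOrb.refl x)
    rw [← card_sdiff_add_card_eq_card hOS]
    refine dvd_add (ih (S \ O) ?_ ?_ ?_) (hq x hx O hO)
    · exact sdiff_ssubset hOS ⟨x, hxO⟩
    · intro u hu v huv
      rw [mem_sdiff] at hu ⊢
      refine ⟨hinv u hu.1 v huv, fun hv => hu.2 ?_⟩
      rw [hO] at hv ⊢
      exact hv.trans huv.symm
    · intro u hu
      exact hq u (mem_sdiff.1 hu).1

end Stabilizers

/-! ### Sets of `f` points with nontrivial stabilizer -/

section Counting

open Equiv

variable {α : Type*} [Fintype α] [DecidableEq α] {G : Subgroup (Perm α)}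

/-- Applied to a fixed `(r+1)`-set and the partitions consisting of `r` singletons and the rest, the
universal transversal property shows that every `r`-set lies in a translate of the fixed set. -/
theorem HasUTP.choose_le (hU : HasUTP G) (r : ℕ) (hr : r < Fintype.card α) :
    (Fintype.card α).choose r ≤ Nat.card G * (r + 1) := by
  classical
  obtain ⟨I, -, hI⟩ := exists_subset_card_eq (s := (univ : Finset α)) (n := r + 1)
    (by rw [card_univ]; omega)
  have hcov : powersetCard r (univ : Finset α) ⊆
      (univ.filter (fun g : Perm α => g ∈ G)).biUnion
        (fun g => powersetCard r (I.image g)) := by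
    intro A hA
    rw [mem_powersetCard] at hA
    obtain ⟨b, hb⟩ : ∃ b, b ∉ A := by
      by_contra! hc
      have : A = univ := eq_univ_iff_forall.2 hc
      rw [this, card_univ] at hA
      omega
    let c : α → α := fun x => if x ∈ A then x else b
    have him : univ.image c = insert b A := by
      ext x
      simp only [mem_image, mem_univ, true_and, mem_insert, c]
      constructor
      · rintro ⟨y, rfl⟩
        split_ifs with h
        · right; exact h
        · left; rfl
      · rintro (rfl | hx)
        · exact ⟨x, by simp⟩
        · exact ⟨x, by simp [hx]⟩
    obtain ⟨g, hg, h1, -⟩ := hU.coloring I c (by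
      rw [him, card_insert_of_notMem hb, hA.2, hI])
    rw [mem_biUnion]
    refine ⟨g, by simpa using hg, ?_⟩
    rw [mem_powersetCard]
    refine ⟨fun a ha => ?_, hA.2⟩
    obtain ⟨i, hi, hci⟩ := h1 a
    simp only [c, ha, if_true] at hci
    split_ifs at hci with h
    · exact mem_image.2 ⟨i, hi, hci⟩
    · exact absurd (hci ▸ ha) hb
  have h1 := card_le_card hcov
  rw [card_powersetCard, card_univ] at h1
  refine h1.trans (card_biUnion_le.trans ?_)
  have h2 : ∀ g ∈ univ.filter (fun g : Perm α => g ∈ G),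
      #(powersetCard r (I.image g)) ≤ r + 1 := by
    intro g _
    rw [card_powersetCard, card_image_of_injective _ g.injective, hI]
    simp
  refine (sum_le_card_nsmul _ _ _ h2).trans ?_
  rw [smul_eq_mul, Nat.card_eq_fintype_card, Fintype.card_subtype]

/-- The standing assumptions: `G` has the universal transversal property, `f` is the largest number
of points fixed by a nonidentity element of `G`, and `7 ≤ f ≤ (n - 2) / 2`. -/
structure Setup (G : Subgroup (Perm α)) (f : ℕ) : Prop where
  utp : HasUTP G
  trans : ∀ x y : α, ∃ g ∈ G, g x = y
  le : ∀ A, Nt G A → #A ≤ f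
  ex : ∃ A, #A = f ∧ Nt G A
  two_mul : 2 * f + 2 ≤ Fintype.card α
  seven : 7 ≤ f

theorem exists_notMem_of_card_lt {A : Finset α} (h : #A < Fintype.card α) : ∃ x, x ∉ A := by
  by_contra! hc
  rw [eq_univ_iff_forall.2 hc, card_univ] at h
  omega

end Counting

namespace Setup

open Equiv

variable {α : Type*} [Fintype α] [DecidableEq α] {G : Subgroup (Perm α)} {f : ℕ}

/-- The graph on the complement of an `(f-2)`-set `A`, whose edges are the pairs `xy` such that
`A + x + y` has nontrivial pointwise stabilizer, has an edge across every cut. -/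
theorem cut (S : Setup G f) {A : Finset α} (hA : #A + 2 = f) (p : α → Prop) {x0 y0 : α}
    (hx0 : x0 ∉ A) (hy0 : y0 ∉ A) (hpx : p x0) (hpy : ¬ p y0) :
    ∃ x y, x ∉ A ∧ y ∉ A ∧ p x ∧ ¬ p y ∧ Nt G (insert y (insert x A)) := by
  classical
  obtain ⟨F, hF, hN⟩ := S.ex
  let c : α → α := fun z => if z ∈ A then z else if p z then x0 else y0
  have hcA : ∀ z ∈ A, c z = z := fun z hz => by simp [c, hz]
  have hcx : ∀ z, z ∉ A → p z → c z = x0 := fun z hz h => by simp [c, hz, h]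
  have hcy : ∀ z, z ∉ A → ¬ p z → c z = y0 := fun z hz h => by simp [c, hz, h]
  have hxy : x0 ≠ y0 := fun h => hpy (h ▸ hpx)
  have him : univ.image c = insert y0 (insert x0 A) := by
    ext z
    simp only [mem_image, mem_univ, true_and, mem_insert]
    constructor
    · rintro ⟨y, rfl⟩
      by_cases hy : y ∈ A
      · right; right; rwa [hcA y hy]
      by_cases h : p y
      · right; left; exact hcx y hy h
      · left; exact hcy y hy h
    · rintro (rfl | rfl | hz)
      · exact ⟨z, hcy z hy0 hpy⟩
      · exact ⟨z, hcx z hx0 hpx⟩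
      · exact ⟨z, hcA z hz⟩
  obtain ⟨g, hg, h1, -⟩ := S.utp.coloring F c (by
    rw [him, card_insert_of_notMem, card_insert_of_notMem hx0, hF, ← hA]
    rw [mem_insert]; rintro (h | h)
    · exact hxy h.symm
    · exact hy0 h)
  have hA' : ∀ z, c z ∈ A → c z = z := by
    intro z hz
    by_cases hzA : z ∈ A
    · exact hcA z hzA
    by_cases h : p z
    · rw [hcx z hzA h] at hz; exact absurd hz hx0
    · rw [hcy z hzA h] at hz; exact absurd hz hy0
  obtain ⟨i, hi, hci⟩ := h1 x0
  obtain ⟨j, hj, hcj⟩ := h1 y0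
  rw [hcx x0 hx0 hpx] at hci
  rw [hcy y0 hy0 hpy] at hcj
  have hi1 : g i ∉ A := fun h => hx0 (by rwa [← hci, hcA _ h])
  have hj1 : g j ∉ A := fun h => hy0 (by rwa [← hcj, hcA _ h])
  refine ⟨g i, g j, hi1, hj1, ?_, ?_, ?_⟩
  · by_contra h
    rw [hcy _ hi1 h] at hci; exact hxy hci.symm
  · intro h
    rw [hcx _ hj1 h] at hcj; exact hxy hcj
  · refine (hN.image hg).mono ?_
    intro z hz
    rw [mem_insert, mem_insert] at hz
    rw [mem_image]
    rcases hz with rfl | rfl | hz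
    · exact ⟨j, hj, rfl⟩
    · exact ⟨i, hi, rfl⟩
    · obtain ⟨k, hk, hck⟩ := h1 z
      rw [hcA z hz] at hck
      exact ⟨k, hk, (hA' (g k) (by rw [hck]; exact hz)).symm.trans hck⟩

/-- Every `(f-1)`-set extends to an `f`-set with nontrivial stabilizer: use the cut which isolates
one of its points. -/
theorem exists_nt (S : Setup G f) {B : Finset α} (hB : #B + 1 = f) :
    ∃ x, x ∉ B ∧ Nt G (insert x B) := by
  have := S.seven
  have := S.two_mul
  obtain ⟨b, hb⟩ : B.Nonempty := card_pos.1 (by omega)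
  obtain ⟨y, hy⟩ := exists_notMem_of_card_lt (A := B) (by omega)
  have hcard := card_erase_add_one hb
  obtain ⟨u, v, hu, hv, rfl, hvb, hN⟩ := S.cut (A := B.erase b) (by omega) (fun z => z = b)
    (notMem_erase b B) (y0 := y) (fun h => hy (mem_of_mem_erase h)) rfl
    (fun h => hy (h ▸ hb))
  rw [insert_erase hb] at hN
  exact ⟨v, fun h => hv (mem_erase.2 ⟨hvb, h⟩), hN⟩

open Classical in
/-- If `K = G_(B)` and `K_x ≠ 1`, then the stabilizers `K_z`, for `z` in the `K`-orbit of `x`, contain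
at least `|K| / 2` nonidentity elements, counted with multiplicity. -/
theorem card_le_two_mul_sum {B : Finset α} {x : α} (hx : Nt G (insert x B)) :
    Nat.card (ptStab G B) ≤
      2 * ∑ z ∈ univ.filter (fun z => SOrb G B x z),
        #((univ.filter (fun g => g ∈ ptStab G (insert z B))).erase 1) := by
  have h1 : ∀ z ∈ univ.filter (fun z => SOrb G B x z),
      #((univ.filter (fun g => g ∈ ptStab G (insert z B))).erase 1) =
        Nat.card (ptStab G (insert x B)) - 1 := by
    intro z hz
    rw [card_erase_of_mem (by simp [one_mem]), card_filter_ptStab,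
      card_ptStab_insert_congr (mem_filter.1 hz).2]
  rw [sum_congr rfl h1, sum_const, smul_eq_mul, ← card_orbit_mul G B x]
  have h2 := one_lt_card_ptStab hx
  calc _ ≤ #{y | SOrb G B x y} * (2 * (Nat.card (ptStab G (insert x B)) - 1)) :=
        Nat.mul_le_mul_left _ (by omega)
    _ = _ := by ring

/-- For an `(f-1)`-set `B` with stabilizer `K`, the points `x` with `K_x ≠ 1` form a single orbit:
a nonidentity element of `K` fixes at most one point outside `B`, and two such orbits
would account for at least `|K|` nonidentity elements. -/
theorem orb_of_nt (S : Setup G f) {B : Finset α} (hB : #B + 1 = f) {x y : α}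
    (hx : x ∉ B) (hy : y ∉ B) (hNx : Nt G (insert x B)) (hNy : Nt G (insert y B)) :
    SOrb G B x y := by
  classical
  by_contra hc
  have h1 := card_le_two_mul_sum hNx
  have h2 := card_le_two_mul_sum hNy
  set E : α → Finset (Perm α) :=
    fun z => (univ.filter (fun g => g ∈ ptStab G (insert z B))).erase 1 with hE
  have hmemE : ∀ z g, g ∈ E z ↔ g ≠ 1 ∧ g ∈ ptStab G (insert z B) := by
    intro z g; simp [hE]
  set X := univ.filter (fun z => SOrb G B x z) with hX
  set Y := univ.filter (fun z => SOrb G B y z) with hY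
  have hd : Disjoint X Y := by
    rw [disjoint_left]
    intro z hz hz'
    exact hc ((mem_filter.1 hz).2.trans (mem_filter.1 hz').2.symm)
  have hXYB : ∀ z ∈ X ∪ Y, z ∉ B := by
    intro z hz
    rcases mem_union.1 hz with hz | hz
    · exact (mem_filter.1 hz).2.notMem hx
    · exact (mem_filter.1 hz).2.notMem hy
  have h3 : ∑ z ∈ X ∪ Y, #(E z) ≤ Nat.card (ptStab G B) - 1 := by
    rw [← card_biUnion, ← card_filter_ptStab,
      ← card_erase_of_mem (a := 1) (by simp [one_mem])]
    · refine card_le_card fun g hg => ?_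
      obtain ⟨z, -, hg⟩ := mem_biUnion.1 hg
      rw [hmemE] at hg
      rw [mem_erase, mem_filter]
      exact ⟨hg.1, mem_univ _, hg.2.1, fun a ha => hg.2.2 a (mem_insert_of_mem ha)⟩
    · intro u hu v hv huv
      rw [Function.onFun, disjoint_left]
      intro g hgu hgv
      rw [hmemE] at hgu hgv
      have hle := S.le (insert u (insert v B)) ⟨g, hgu.2.1, hgu.1, by
        intro a ha
        rcases mem_insert.1 ha with rfl | ha
        · exact hgu.2.2 _ (mem_insert_self _ _)
        · exact hgv.2.2 _ ha⟩
      rw [card_insert_of_notMem, card_insert_of_notMem (hXYB v hv)] at hle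
      · omega
      · rw [mem_insert]; rintro (h | h)
        · exact huv h
        · exact hXYB u hu h
  rw [sum_union hd] at h3
  change _ ≤ 2 * ∑ z ∈ X, #(E z) at h1
  change _ ≤ 2 * ∑ z ∈ Y, #(E z) at h2
  have := card_ptStab_pos G B
  omega

/-- If `xy` is an edge over the `(f-2)`-set `A`, then every edge at a point of the orbit of `x` leads
to the orbit of `y` and vice versa; as there is an edge across every cut, the two orbits cover the
complement of `A`. -/
theorem orb_or_orb (S : Setup G f) {A : Finset α} (hA : #A + 2 = f) {x y z : α}
    (hx : x ∉ A) (hy : y ∉ A) (hxy : x ≠ y) (hz : z ∉ A) (hN : Nt G (insert y (insert x A))) :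
    SOrb G A x z ∨ SOrb G A y z := by
  by_contra hc
  have key : ∀ u v, u ∉ A → v ∉ A → u ≠ v → Nt G (insert v (insert u A)) →
      ∀ w w', w' ∉ A → w ≠ w' → SOrb G A u w → Nt G (insert w' (insert w A)) → SOrb G A v w' := by
    intro u v hu hv huv hN w w' hw' hww hr hN'
    obtain ⟨w2, h1, h2, h3⟩ := hN'.transport hr.symm
    have hne := h2 hww.symm
    have := S.orb_of_nt (B := insert u A) (by rw [card_insert_of_notMem hu]; omega)
      (x := v) (y := w2) (by simp [hv, huv.symm]) (by simp [hne, h1.notMem hw']) hN h3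
    exact this.of_insert.trans h1.symm
  obtain ⟨w, w', hw, hw', hp, hp', hNw⟩ := S.cut hA
    (fun w => SOrb G A x w ∨ SOrb G A y w) hx hz (Or.inl (SOrb.refl x)) hc
  have hww : w ≠ w' := fun h => hp' (h ▸ hp)
  apply hp'
  rcases hp with hp | hp
  · right; exact key x y hx hy hxy hN w w' hw' hww hp hNw
  · left; exact key y x hy hx hxy.symm (by rwa [insert_comm]) w w' hw' hww hp hNw

/-- If the ends of one edge over `A` lie in the same orbit, that orbit is the complement of `A`. -/
theorem sTrans_of_edge (S : Setup G f) {A : Finset α} (hA : #A + 2 = f) {x y : α}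
    (hx : x ∉ A) (hy : y ∉ A) (hxy : x ≠ y) (hN : Nt G (insert y (insert x A)))
    (hr : SOrb G A x y) : STrans G A := by
  have h : ∀ z, z ∉ A → SOrb G A x z := by
    intro z hz
    rcases S.orb_or_orb hA hx hy hxy hz hN with h | h
    · exact h
    · exact hr.trans h
  intro u v hu hv
  exact (h u hu).symm.trans (h v hv)

/-- The stabilizer of an `(f-2)`-set has at most two orbits on the other points. -/
theorem two_orbits_top (S : Setup G f) {A : Finset α} (hA : #A + 2 = f) {u v w : α}
    (hu : u ∉ A) (hv : v ∉ A) (hw : w ∉ A) :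
    SOrb G A u v ∨ SOrb G A u w ∨ SOrb G A v w := by
  have := S.two_mul
  obtain ⟨x, hx⟩ := exists_notMem_of_card_lt (A := A) (by omega)
  obtain ⟨y, hy, hN⟩ := S.exists_nt (B := insert x A) (by rw [card_insert_of_notMem hx]; omega)
  rw [mem_insert, not_or] at hy
  have h1 := S.orb_or_orb hA hx hy.2 (Ne.symm hy.1) hu hN
  have h2 := S.orb_or_orb hA hx hy.2 (Ne.symm hy.1) hv hN
  have h3 := S.orb_or_orb hA hx hy.2 (Ne.symm hy.1) hw hN
  rcases h1 with h1 | h1 <;> rcases h2 with h2 | h2 <;> rcases h3 with h3 | h3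
  · exact Or.inl (h1.symm.trans h2)
  · exact Or.inl (h1.symm.trans h2)
  · exact Or.inr (Or.inl (h1.symm.trans h3))
  · exact Or.inr (Or.inr (h2.symm.trans h3))
  · exact Or.inr (Or.inr (h2.symm.trans h3))
  · exact Or.inr (Or.inl (h1.symm.trans h3))
  · exact Or.inl (h1.symm.trans h2)
  · exact Or.inl (h1.symm.trans h2)

end Setup

/-! ### `(f-2)`-transitivity -/

section MultTrans

open Equiv

variable {α : Type*} [Fintype α] [DecidableEq α] {G : Subgroup (Perm α)}

/-- The pointwise stabilizer of `C` is transitive on the complement of `C` minus some point. -/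
def AlmostTrans (G : Subgroup (Perm α)) (C : Finset α) : Prop :=
  ∃ y, ∀ u v, u ∉ C → v ∉ C → u ≠ y → v ≠ y → SOrb G C u v

/-- Transitivity of successive point stabilizers amounts to multiple transitivity: every
permutation agrees on `T` with an element of `G`. -/
theorem exists_eqOn {k : ℕ} (h : ∀ C : Finset α, #C < k → STrans G C) (T : Finset α)
    (hT : #T ≤ k) (σ : Perm α) : ∃ g ∈ G, ∀ x ∈ T, g x = σ x := by
  induction T using Finset.induction_on with
  | empty => exact ⟨1, G.one_mem, by simp⟩
  | insert x T hx ih =>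
    rw [card_insert_of_notMem hx] at hT
    obtain ⟨g, hg, hgT⟩ := ih (by omega)
    have hnot : ∀ τ : Perm α, (∀ y ∈ T, τ y = σ y) → τ x ∉ T.image σ := by
      intro τ hτ hm
      obtain ⟨y, hy, hyx⟩ := mem_image.1 hm
      rw [← hτ y hy] at hyx
      exact hx (τ.injective hyx ▸ hy)
    obtain ⟨k', hk, hkT, hkx⟩ := h (T.image σ)
      (by rw [card_image_of_injective _ σ.injective]; omega) (g x) (σ x)
      (hnot g hgT) (hnot σ fun _ _ => rfl)
    refine ⟨k' * g, G.mul_mem hk hg, fun y hy => ?_⟩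
    rw [Perm.mul_apply]
    rcases mem_insert.1 hy with rfl | hy
    · exact hkx
    · rw [hgT y hy]; exact hkT _ (mem_image_of_mem _ hy)

theorem STrans.image {A : Finset α} (h : STrans G A) {g : Perm α} (hg : g ∈ G) :
    STrans G (A.image g) := by
  intro x y hx hy
  have hx' : g⁻¹ x ∉ A := fun h' => hx (mem_image.2 ⟨_, h', perm_apply_inv g x⟩)
  have hy' : g⁻¹ y ∉ A := fun h' => hy (mem_image.2 ⟨_, h', perm_apply_inv g y⟩)
  have := (h _ _ hx' hy').image hg
  rwa [perm_apply_inv, perm_apply_inv] at this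

theorem exists_perm_image {A B : Finset α} (h : #A = #B) : ∃ σ : Perm α, A.image σ = B := by
  let e : {x // x ∈ A} ≃ {x // x ∈ B} := Finset.equivOfCardEq h
  refine ⟨e.extendSubtype, ?_⟩
  apply eq_of_subset_of_card_le
  · intro x hx
    obtain ⟨a, ha, rfl⟩ := mem_image.1 hx
    exact e.extendSubtype_mem a ha
  · rw [card_image_of_injective _ (Equiv.injective _), h]

theorem STrans.of_card_eq {k : ℕ} (h : ∀ C : Finset α, #C < k → STrans G C) {A B : Finset α}
    (hA : #A ≤ k) (hAB : #A = #B) (ht : STrans G A) : STrans G B := by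
  obtain ⟨σ, rfl⟩ := exists_perm_image hAB
  obtain ⟨g, hg, hgA⟩ := exists_eqOn h A hA σ
  rw [← image_congr (s := A) (f := g) (fun a ha => hgA a ha)]
  exact ht.image hg

end MultTrans

namespace Setup

open Equiv

variable {α : Type*} [Fintype α] [DecidableEq α] {G : Subgroup (Perm α)} {f : ℕ}

/-- For `|C| = f - 3`, take a triple `x, y, z` with `C + x + y + z` of nontrivial stabilizer; each pair
from it is an edge over `C` plus the third point, and `orb_or_orb` applies to all three. -/
theorem almostTrans_top (S : Setup G f) {C : Finset α} (hC : #C + 3 = f) : AlmostTrans G C := by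
  have h2f := S.two_mul
  by_cases hall : ∀ x y, x ∉ C → y ∉ C → SOrb G C x y
  · obtain ⟨y, hy⟩ := exists_notMem_of_card_lt (A := C) (by omega)
    exact ⟨y, fun u v hu hv _ _ => hall u v hu hv⟩
  push Not at hall
  obtain ⟨x, y, hx, hy, hxy⟩ := hall
  have hne : x ≠ y := fun h => hxy (h ▸ SOrb.refl x)
  have hyx : y ∉ insert x C := by simp [hy, hne.symm]
  obtain ⟨z, hz, hN⟩ := S.exists_nt (B := insert y (insert x C))
    (by rw [card_insert_of_notMem hyx, card_insert_of_notMem hx]; omega)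
  simp only [mem_insert, not_or] at hz
  obtain ⟨hzy, hzx, hzC⟩ := hz
  -- the edge `vw` over `C + u` controls the orbits of the stabilizer of `C`
  have key : ∀ u v w, u ∉ C → v ∉ C → w ∉ C → u ≠ v → u ≠ w → v ≠ w →
      Nt G (insert w (insert v (insert u C))) →
      ∀ t, t ∉ C → t ≠ u → SOrb G C v t ∨ SOrb G C w t := by
    intro u v w hu hv hw huv huw hvw hN t ht htu
    have := S.orb_or_orb (A := insert u C) (by rw [card_insert_of_notMem hu]; omega)
      (x := v) (y := w) (z := t) (by simp [hv, huv.symm]) (by simp [hw, huw.symm]) hvw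
      (by simp [ht, htu]) hN
    exact this.imp SOrb.of_insert SOrb.of_insert
  have kx := key x y z hx hy hzC hne (Ne.symm hzx) (Ne.symm hzy) hN
  have ky := key y x z hy hx hzC hne.symm (Ne.symm hzy) (Ne.symm hzx)
    (by rwa [insert_comm x y])
  have kz := key z x y hzC hx hy hzx hzy hne (by
    rwa [insert_comm x z, insert_comm y z])
  by_cases hxz : SOrb G C x z
  · refine ⟨y, fun u v hu hv huy hvy => ?_⟩
    have h : ∀ t, t ∉ C → t ≠ y → SOrb G C x t := fun t ht hty =>
      (ky t ht hty).elim id (fun h => hxz.trans h)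
    exact (h u hu huy).symm.trans (h v hv hvy)
  by_cases hyz : SOrb G C y z
  · refine ⟨x, fun u v hu hv hux hvx => ?_⟩
    have h : ∀ t, t ∉ C → t ≠ x → SOrb G C y t := fun t ht htx =>
      (kx t ht htx).elim id (fun h => hyz.trans h)
    exact (h u hu hux).symm.trans (h v hv hvx)
  exfalso
  have hzz : z ∉ insert y (insert x C) := by simp [hzC, hzy, hzx]
  obtain ⟨w, hw⟩ := exists_notMem_of_card_lt (A := insert z (insert y (insert x C)))
    (by rw [card_insert_of_notMem hzz, card_insert_of_notMem hyx, card_insert_of_notMem hx]; omega)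
  simp only [mem_insert, not_or] at hw
  obtain ⟨hwz, hwy, hwx, hwC⟩ := hw
  rcases kx w hwC hwx with h1 | h1
  · rcases ky w hwC hwy with h2 | h2
    · exact hxy (h2.trans h1.symm)
    · exact hyz (h1.trans h2.symm)
  · rcases kz w hwC hwz with h2 | h2
    · exact hxz (h2.trans h1.symm)
    · exact hyz (h2.trans h1.symm)

/-- Compare the stabilizers of `C + x₁` and `C + x₂` for two suitable points `x₁`, `x₂`. -/
theorem almostTrans_down {C : Finset α} (hC : #C + 5 ≤ Fintype.card α)
    (h : ∀ x, x ∉ C → AlmostTrans G (insert x C)) : AlmostTrans G C := by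
  obtain ⟨x1, hx1⟩ := exists_notMem_of_card_lt (A := C) (by omega)
  obtain ⟨y1, h1⟩ := h x1 hx1
  obtain ⟨x2, hx2⟩ := exists_notMem_of_card_lt (A := insert x1 (insert y1 C)) (by
    have := card_insert_le x1 (insert y1 C)
    have := card_insert_le y1 C
    omega)
  simp only [mem_insert, not_or] at hx2
  obtain ⟨hx21, hx2y, hx2C⟩ := hx2
  obtain ⟨y2, h2⟩ := h x2 hx2C
  obtain ⟨w, hw⟩ := exists_notMem_of_card_lt (A := insert x1 (insert y1 (insert x2 (insert y2 C))))
    (by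
      have := card_insert_le x1 (insert y1 (insert x2 (insert y2 C)))
      have := card_insert_le y1 (insert x2 (insert y2 C))
      have := card_insert_le x2 (insert y2 C)
      have := card_insert_le y2 C
      omega)
  simp only [mem_insert, not_or] at hw
  obtain ⟨hw1, hw2, hw3, hw4, hwC⟩ := hw
  have key : ∀ u, u ∉ C → u ≠ y2 → SOrb G C u w := by
    intro u hu huy
    by_cases hux : u = x2
    · subst hux
      exact (h1 u w (by simp [hu, hx21]) (by simp [hwC, hw1]) hx2y hw2).of_insert
    · exact (h2 u w (by simp [hu, hux]) (by simp [hwC, hw3]) huy hw4).of_insert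
  exact ⟨y2, fun u v hu hv huy hvy => (key u hu huy).trans (key v hv hvy).symm⟩

theorem almostTrans (S : Setup G f) : ∀ (d : ℕ) (C : Finset α), #C + 3 + d = f → AlmostTrans G C
  | 0, C, hC => S.almostTrans_top (by omega)
  | d + 1, C, hC => almostTrans_down (by have := S.two_mul; omega) fun x hx =>
      S.almostTrans d (insert x C) (by rw [card_insert_of_notMem hx]; omega)

/-- The stabilizer of at most `f - 2` points has at most two orbits on the other points. -/
theorem two_orbits (S : Setup G f) {C : Finset α} (hC : #C + 2 ≤ f) {u v w : α}
    (hu : u ∉ C) (hv : v ∉ C) (hw : w ∉ C) :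
    SOrb G C u v ∨ SOrb G C u w ∨ SOrb G C v w := by
  by_cases h : #C + 2 = f
  · exact S.two_orbits_top h hu hv hw
  obtain ⟨y, hy⟩ := S.almostTrans (f - 3 - #C) C (by omega)
  by_cases huy : u = y
  · by_cases hvy : v = y
    · left; rw [huy, hvy]; exact SOrb.refl y
    by_cases hwy : w = y
    · right; left; rw [huy, hwy]; exact SOrb.refl y
    · exact Or.inr (Or.inr (hy v w hv hw hvy hwy))
  · by_cases hvy : v = y
    · by_cases hwy : w = y
      · right; right; rw [hvy, hwy]; exact SOrb.refl y
      · exact Or.inr (Or.inl (hy u w hu hw huy hwy))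
    · exact Or.inl (hy u v hu hv huy hvy)

/-- One step of the ascent: if `G_(C)` is transitive but `G_(C+x)` is not, the latter fixes exactly
one further point `c(x)`; then `G_(C+x+z)` fixes both `c(x)` and `c(z)`, hence has at least
three orbits. -/
theorem sTrans_insert (S : Setup G f) {C : Finset α} (hC : #C + 4 ≤ f) (ht : STrans G C)
    {x : α} (hx : x ∉ C) : STrans G (insert x C) := by
  have h2f := S.two_mul
  have hcx : #(insert x C) = #C + 1 := card_insert_of_notMem hx
  obtain ⟨y, hy⟩ := S.almostTrans (f - 3 - #(insert x C)) (insert x C) (by omega)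
  by_contra hnt
  have hyC : y ∉ insert x C := by
    intro hyC
    apply hnt
    intro u v hu hv
    exact hy u v hu hv (fun h => hu (h ▸ hyC)) (fun h => hv (h ▸ hyC))
  -- `y` is fixed by the stabilizer of `C + x`
  have hfix : ∀ w, SOrb G (insert x C) y w → w = y := by
    intro w hw
    by_contra hwy
    apply hnt
    have h : ∀ u, u ∉ insert x C → SOrb G (insert x C) u w := by
      intro u hu
      by_cases huy : u = y
      · rw [huy]; exact hw
      · exact hy u w hu (hw.notMem hyC) huy hwy
    intro u v hu hv
    exact (h u hu).trans (h v hv).symm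
  have hxy : y ≠ x ∧ y ∉ C := by simpa using hyC
  have hDsymm : ∀ u v, u ∉ C → v ∉ C → ptStab G (insert u C) ≤ ptStab G (insert v C) →
      ptStab G (insert v C) ≤ ptStab G (insert u C) := by
    intro u v hu hv hle
    have := Subgroup.eq_of_le_of_card_ge hle (card_ptStab_insert_congr (ht u v hu hv)).ge
    exact this.ge
  have hD : ∀ u v, ptStab G (insert u C) ≤ ptStab G (insert v C) ↔
      ∀ w, SOrb G (insert u C) v w → w = v := by
    intro u v
    constructor
    · rintro hle w ⟨g, hg, ha, rfl⟩
      exact (hle (show g ∈ ptStab G (insert u C) from ⟨hg, ha⟩)).2 v (mem_insert_self _ _)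
    · intro h g hg
      refine ⟨hg.1, fun a ha => ?_⟩
      rcases mem_insert.1 ha with rfl | ha
      · exact h _ ⟨g, hg.1, hg.2, rfl⟩
      · exact hg.2 a (mem_insert_of_mem ha)
  have hDxy := (hD x y).2 hfix
  obtain ⟨z, hz⟩ := exists_notMem_of_card_lt (A := insert y (insert x C)) (by
    rw [card_insert_of_notMem hyC]; omega)
  simp only [mem_insert, not_or] at hz
  obtain ⟨hzy, hzx, hzC⟩ := hz
  obtain ⟨k, hk, hkC, hkx⟩ := ht x z hx hzC
  have himC : (insert x C).image k = insert z C := by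
    rw [image_insert, hkx, image_eq_of_fix hkC]
  have hkyC : k y ∉ C := fun h => hxy.2 (by rwa [k.injective (hkC _ h)] at h)
  have hDz : ptStab G (insert z C) ≤ ptStab G (insert (k y) C) := by
    rw [hD]
    intro w hw
    have h1 := hw.image (G.inv_mem hk)
    rw [perm_inv_apply, ← himC, image_image] at h1
    have h2 : (insert x C).image (⇑k⁻¹ ∘ ⇑k) = insert x C := by
      have : (⇑k⁻¹ ∘ ⇑k) = id := funext fun t => perm_inv_apply k t
      rw [this, image_id]
    rw [h2] at h1
    have := hfix _ h1
    rw [← this, perm_apply_inv]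
  have hkz : k y ≠ z := by rw [← hkx]; exact fun h => hxy.1 (k.injective h)
  have hnD : ¬ ptStab G (insert x C) ≤ ptStab G (insert z C) := by
    rw [hD]
    intro h
    obtain ⟨w, hw⟩ := exists_notMem_of_card_lt (A := insert z (insert y (insert x C))) (by
      have := card_insert_le z (insert y (insert x C))
      rw [card_insert_of_notMem hyC] at this; omega)
    simp only [mem_insert, not_or] at hw
    obtain ⟨hwz, hwy, hwx, hwC⟩ := hw
    exact hwz (h w (hy z w (by simp [hzC, hzx]) (by simp [hwC, hwx]) hzy hwy))
  have hkyx : k y ≠ x := by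
    intro h
    rw [h] at hDz
    exact hnD (hDsymm z x hzC hx hDz)
  have hkyy : k y ≠ y := by
    intro h
    rw [h] at hDz
    exact hnD (hDxy.trans (hDsymm z y hzC hxy.2 hDz))
  -- the stabilizer of `C + x + z` fixes both `y` and `k y`
  have hzxC : z ∉ insert x C := by simp [hzC, hzx]
  obtain ⟨w, hw⟩ := exists_notMem_of_card_lt (A := insert (k y) (insert y (insert z (insert x C))))
    (by
      have := card_insert_le (k y) (insert y (insert z (insert x C)))
      have := card_insert_le y (insert z (insert x C))
      rw [card_insert_of_notMem hzxC] at this; omega)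
  simp only [mem_insert, not_or] at hw
  obtain ⟨hwk, hwy, hwz, hwx, hwC⟩ := hw
  have e1 : ∀ t, SOrb G (insert z (insert x C)) y t → t = y := fun t h => hfix t h.of_insert
  have e2 : ∀ t, SOrb G (insert z (insert x C)) (k y) t → t = k y := fun t h => by
    rw [insert_comm] at h
    exact (hD z (k y)).1 hDz t h.of_insert
  rcases S.two_orbits (C := insert z (insert x C))
    (by rw [card_insert_of_notMem hzxC]; omega) (u := y) (v := k y) (w := w)
    (by simp [hxy, Ne.symm hzy]) (by simp [hkz, hkyx, hkyC]) (by simp [hwz, hwx, hwC])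
    with h | h | h
  · exact hkyy (e1 _ h)
  · exact hwy (e1 _ h)
  · exact hwk (e2 _ h)

/-- `G` is `(f-2)`-transitive. -/
theorem sTrans_low (S : Setup G f) (C : Finset α) (hC : #C + 3 ≤ f) : STrans G C := by
  induction C using Finset.induction_on with
  | empty =>
    intro x y _ _
    obtain ⟨g, hg, h⟩ := S.trans x y
    exact ⟨g, hg, by simp, h⟩
  | insert x C hx ih =>
    rw [card_insert_of_notMem hx] at hC
    exact S.sTrans_insert (by omega) (ih (by omega)) hx

end Setup

/-! ### Orbits on `(f-1)`-tuples -/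

namespace Setup

open Equiv

variable {α : Type*} [Fintype α] [DecidableEq α] {G : Subgroup (Perm α)} {f : ℕ}

theorem exists_eqOn_low (S : Setup G f) (T : Finset α) (hT : #T + 2 ≤ f) (σ : Perm α) :
    ∃ g ∈ G, ∀ x ∈ T, g x = σ x := by
  refine exists_eqOn (k := f - 2) (fun C hC => S.sTrans_low C (by omega)) T (by omega) σ

/-- If no `(f-2)`-set has a transitive stabilizer, then `M = G_(C)` with `|C| = f - 3` has two
orbitals, and the sides of a triangle over `C` show that they are not self-paired. -/
theorem no_swap (S : Setup G f) (hnot : ∀ A : Finset α, #A + 2 = f → ¬ STrans G A)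
    {C : Finset α} (hC : #C + 3 = f) {a b : α} (ha : a ∉ C) (hb : b ∉ C) (hab : a ≠ b)
    {s : Perm α} (hs : s ∈ G) (hsC : ∀ c ∈ C, s c = c) (hsa : s a = b) (hsb : s b = a) :
    False := by
  have ht : STrans G C := S.sTrans_low C (by omega)
  have h2f := S.two_mul
  -- `E p q`: the pairs `p` and `q` lie in the same orbital of `G_(C)`
  let E : α × α → α × α → Prop := fun p q =>
    ∃ g ∈ G, (∀ c ∈ C, g c = c) ∧ g p.1 = q.1 ∧ g p.2 = q.2
  have Esymm : ∀ p q, E p q → E q p := by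
    rintro p q ⟨g, hg, hgC, h1, h2⟩
    refine ⟨g⁻¹, G.inv_mem hg, fun c hc => ?_, ?_, ?_⟩ <;> rw [Perm.inv_eq_iff_eq]
    · exact (hgC c hc).symm
    · exact h1.symm
    · exact h2.symm
  have Etrans : ∀ p q r, E p q → E q r → E p r := by
    rintro p q r ⟨g, hg, hgC, h1, h2⟩ ⟨k, hk, hkC, h3, h4⟩
    refine ⟨k * g, G.mul_mem hk hg, fun c hc => ?_, ?_, ?_⟩ <;> rw [Perm.mul_apply]
    · rw [hgC c hc, hkC c hc]
    · rw [h1, h3]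
    · rw [h2, h4]
  have Eswap : ∀ p q, E p q → E p.swap q.swap := by
    rintro p q ⟨g, hg, hgC, h1, h2⟩
    exact ⟨g, hg, hgC, h2, h1⟩
  -- every pair may be moved to one with first entry `a`
  have Enorm : ∀ p : α × α, p.1 ∉ C → p.2 ∉ C → p.1 ≠ p.2 →
      ∃ w, w ∉ insert a C ∧ E p (a, w) := by
    intro p h1 h2 h12
    obtain ⟨g, hg, hgC, hga⟩ := ht p.1 a h1 ha
    refine ⟨g p.2, ?_, g, hg, hgC, hga, rfl⟩
    rw [mem_insert, not_or, ← hga]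
    refine ⟨fun h => h12 (g.injective h).symm, fun h => h2 ?_⟩
    rwa [g.injective (hgC _ h)] at h
  have Eorb : ∀ u v, SOrb G (insert a C) u v → E (a, u) (a, v) := by
    rintro u v ⟨g, hg, hgC, h⟩
    exact ⟨g, hg, fun c hc => hgC c (mem_insert_of_mem hc), hgC a (mem_insert_self _ _), h⟩
  have Etwo : ∀ p q r : α × α, p.1 ∉ C → p.2 ∉ C → p.1 ≠ p.2 → q.1 ∉ C → q.2 ∉ C → q.1 ≠ q.2 →
      r.1 ∉ C → r.2 ∉ C → r.1 ≠ r.2 → E p q ∨ E p r ∨ E q r := by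
    intro p q r p1 p2 p3 q1 q2 q3 r1 r2 r3
    obtain ⟨u, hu, hpu⟩ := Enorm p p1 p2 p3
    obtain ⟨v, hv, hqv⟩ := Enorm q q1 q2 q3
    obtain ⟨w, hw, hrw⟩ := Enorm r r1 r2 r3
    rcases S.two_orbits (C := insert a C) (by rw [card_insert_of_notMem ha]; omega) hu hv hw
      with h | h | h
    · exact Or.inl (Etrans _ _ _ hpu (Etrans _ _ _ (Eorb _ _ h) (Esymm _ _ hqv)))
    · exact Or.inr (Or.inl (Etrans _ _ _ hpu (Etrans _ _ _ (Eorb _ _ h) (Esymm _ _ hrw))))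
    · exact Or.inr (Or.inr (Etrans _ _ _ hqv (Etrans _ _ _ (Eorb _ _ h) (Esymm _ _ hrw))))
  have hself0 : E (a, b) (b, a) := ⟨s, hs, hsC, hsa, hsb⟩
  have hself : ∀ c d, c ∉ C → d ∉ C → c ≠ d → E (c, d) (d, c) := by
    intro c d hc hd hcd
    rcases Etwo (a, b) (c, d) (d, c) ha hb hab hc hd hcd hd hc hcd.symm with h | h | h
    · exact Etrans _ _ _ (Esymm _ _ h) (Etrans _ _ _ hself0 (Eswap _ _ h))
    · exact Esymm _ _ (Etrans _ _ _ (Esymm _ _ h) (Etrans _ _ _ hself0 (Eswap _ _ h)))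
    · exact h
  have hba : b ∉ insert a C := by simp [hb, hab.symm]
  obtain ⟨z, hz, hN⟩ := S.exists_nt (B := insert b (insert a C))
    (by rw [card_insert_of_notMem hba, card_insert_of_notMem ha]; omega)
  simp only [mem_insert, not_or] at hz
  obtain ⟨hzb, hza, hzC⟩ := hz
  have key : ∀ u v w, u ∉ C → v ∉ C → w ∉ C → u ≠ v → u ≠ w → v ≠ w →
      Nt G (insert w (insert v (insert u C))) → ¬ E (u, v) (u, w) := by
    rintro u v w hu hv hw huv huw hvw hN ⟨g, hg, hgC, h1, h2⟩
    refine hnot (insert u C) (by rw [card_insert_of_notMem hu]; omega)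
      (S.sTrans_of_edge (by rw [card_insert_of_notMem hu]; omega)
        (x := v) (y := w) (by simp [hv, huv.symm]) (by simp [hw, huw.symm]) hvw hN
        ⟨g, hg, fun c hc => ?_, h2⟩)
    rcases mem_insert.1 hc with rfl | hc
    · exact h1
    · exact hgC c hc
  have k1 := key a b z ha hb hzC hab (Ne.symm hza) (Ne.symm hzb) hN
  have k2 := key b a z hb ha hzC hab.symm (Ne.symm hzb) (Ne.symm hza) (by rwa [insert_comm a b])
  have k3 := key z a b hzC ha hb hza hzb hab (by rwa [insert_comm a z, insert_comm b z])
  rcases Etwo (a, b) (a, z) (b, z) ha hb hab ha hzC (Ne.symm hza) hb hzC (Ne.symm hzb)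
    with h | h | h
  · exact k1 h
  · exact k2 (Etrans _ _ _ (hself b a hb ha hab.symm) h)
  · exact k3 (Eswap _ _ h)

/-- Agreement of two permutations on `T` up to left multiplication by `G`. -/
def Agree (G : Subgroup (Perm α)) (T : Finset α) (σ τ : Perm α) : Prop :=
  ∃ g ∈ G, ∀ x ∈ T, g (σ x) = τ x

theorem Agree.symm {T : Finset α} {σ τ : Perm α} (h : Agree G T σ τ) : Agree G T τ σ := by
  obtain ⟨g, hg, h⟩ := h
  exact ⟨g⁻¹, G.inv_mem hg, fun x hx => by rw [Perm.inv_eq_iff_eq, h x hx]⟩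

theorem Agree.trans {T : Finset α} {σ τ ρ : Perm α} (h : Agree G T σ τ) (h' : Agree G T τ ρ) :
    Agree G T σ ρ := by
  obtain ⟨g, hg, h⟩ := h
  obtain ⟨k, hk, h'⟩ := h'
  exact ⟨k * g, G.mul_mem hk hg, fun x hx => by rw [Perm.mul_apply, h x hx, h' x hx]⟩

/-- `G` has at most two orbits on `(f-1)`-tuples. -/
theorem agree_two (S : Setup G f) {T : Finset α} (hT : #T + 1 = f) (σ τ ρ : Perm α) :
    Agree G T σ τ ∨ Agree G T σ ρ ∨ Agree G T τ ρ := by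
  have h7 := S.seven
  obtain ⟨x, hx⟩ : T.Nonempty := card_pos.1 (by omega)
  have hcard := card_erase_add_one hx
  have norm : ∀ σ : Perm α, ∃ g ∈ G, (∀ y ∈ T.erase x, g (σ y) = y) ∧ g (σ x) ∉ T.erase x := by
    intro σ
    obtain ⟨g, hg, h⟩ := S.exists_eqOn_low ((T.erase x).image σ)
      (by rw [card_image_of_injective _ σ.injective]; omega) σ⁻¹
    have h1 : ∀ y ∈ T.erase x, g (σ y) = y := fun y hy => by
      rw [h _ (mem_image_of_mem _ hy), perm_inv_apply]
    refine ⟨g, hg, h1, fun hm => ?_⟩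
    have := h1 _ hm
    have := σ.injective (g.injective this)
    rw [this] at hm
    exact notMem_erase x T hm
  have fin : ∀ (σ τ g k : Perm α), g ∈ G → k ∈ G → (∀ y ∈ T.erase x, g (σ y) = y) →
      (∀ y ∈ T.erase x, k (τ y) = y) → SOrb G (T.erase x) (g (σ x)) (k (τ x)) →
      Agree G T σ τ := by
    rintro σ τ g k hg hk h1 h2 ⟨m, hm, hmT, hmx⟩
    refine ⟨k⁻¹ * m * g, G.mul_mem (G.mul_mem (G.inv_mem hk) hm) hg, fun y hy => ?_⟩
    rw [Perm.mul_apply, Perm.mul_apply, Perm.inv_eq_iff_eq]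
    by_cases hyx : y = x
    · rw [hyx, hmx]
    · have hy' : y ∈ T.erase x := mem_erase.2 ⟨hyx, hy⟩
      rw [h1 y hy', h2 y hy', hmT y hy']
  obtain ⟨g1, hg1, h1, h1'⟩ := norm σ
  obtain ⟨g2, hg2, h2, h2'⟩ := norm τ
  obtain ⟨g3, hg3, h3, h3'⟩ := norm ρ
  rcases S.two_orbits (C := T.erase x) (by omega) h1' h2' h3' with h | h | h
  · exact Or.inl (fin _ _ _ _ hg1 hg2 h1 h2 h)
  · exact Or.inr (Or.inl (fin _ _ _ _ hg1 hg3 h1 h3 h))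
  · exact Or.inr (Or.inr (fin _ _ _ _ hg2 hg3 h2 h3 h))

/-- Exchanging two entries of an `(f-1)`-tuple changes its `G`-orbit, unless `G` is
`(f-1)`-transitive. -/
theorem not_agree_swap (S : Setup G f) (hnot : ∀ A : Finset α, #A + 2 = f → ¬ STrans G A)
    {T : Finset α} (hT : #T + 1 = f) (σ : Perm α) {a b : α} (ha : a ∈ T) (hb : b ∈ T)
    (hab : a ≠ b) : ¬ Agree G T σ (σ * swap a b) := by
  rintro ⟨g, hg, h⟩
  have hbe : b ∈ T.erase a := mem_erase.2 ⟨hab.symm, hb⟩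
  have h1 := card_erase_add_one ha
  have h2 := card_erase_add_one hbe
  have hnm : ∀ c, c ∉ (T.erase a).erase b → σ c ∉ ((T.erase a).erase b).image σ := by
    intro c hc hm
    obtain ⟨d, hd, hdc⟩ := mem_image.1 hm
    exact hc (σ.injective hdc ▸ hd)
  refine S.no_swap hnot (C := ((T.erase a).erase b).image σ)
    (by rw [card_image_of_injective _ σ.injective]; omega) (a := σ a) (b := σ b)
    (hnm a (by simp)) (hnm b (by simp)) (fun h => hab (σ.injective h)) hg ?_ ?_ ?_
  · intro c hc
    obtain ⟨d, hd, rfl⟩ := mem_image.1 hc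
    simp only [mem_erase] at hd
    rw [h d hd.2.2, Perm.mul_apply, swap_apply_of_ne_of_ne hd.2.1 hd.1]
  · rw [h a ha, Perm.mul_apply, swap_apply_left]
  · rw [h b hb, Perm.mul_apply, swap_apply_right]

/-- With two orbits on `(f-1)`-tuples interchanged by every transposition of the entries,
no element of `G` induces a product of three transpositions on an `(f-1)`-set. -/
theorem not_agree_three (S : Setup G f) (hnot : ∀ A : Finset α, #A + 2 = f → ¬ STrans G A)
    {T : Finset α} (hT : #T + 1 = f) {a b c d e k : α} (ha : a ∈ T) (hb : b ∈ T) (hc : c ∈ T)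
    (hd : d ∈ T) (he : e ∈ T) (hk : k ∈ T) (hab : a ≠ b) (hcd : c ≠ d) (hek : e ≠ k) :
    ¬ Agree G T 1 (swap a b * swap c d * swap e k) := by
  intro h
  have h1 := S.not_agree_swap hnot hT 1 ha hb hab
  rw [one_mul] at h1
  have h2 := S.not_agree_swap hnot hT (swap a b) hc hd hcd
  have h3 := S.not_agree_swap hnot hT (swap a b * swap c d) he hk hek
  rcases S.agree_two hT (swap a b) (swap a b * swap c d) (swap a b * swap c d * swap e k)
    with h' | h' | h'
  · exact h2 h'
  · exact h1 (h.trans h'.symm)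
  · exact h3 h'

end Setup

/-! ### `(f-1)`-transitivity -/

namespace Setup

open Equiv

variable {α : Type*} [Fintype α] [DecidableEq α] {G : Subgroup (Perm α)} {f : ℕ}

theorem pow_eqOn {g σ : Perm α} {A : Finset α} (hσ : ∀ x ∈ A, σ x ∈ A)
    (h : ∀ x ∈ A, g x = σ x) (k : ℕ) : ∀ x ∈ A, (g ^ k) x = (σ ^ k) x ∧ (σ ^ k) x ∈ A := by
  induction k with
  | zero => intro x hx; exact ⟨rfl, hx⟩
  | succ k ih =>
    intro x hx
    rw [pow_succ', pow_succ', Perm.mul_apply, Perm.mul_apply, (ih x hx).1, h _ (ih x hx).2]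
    exact ⟨rfl, hσ _ (ih x hx).2⟩

/-- A nonidentity element of 2-power order has a power of order two. -/
theorem exists_involution_pow (h : Perm α) (e : ℕ) (he : h ^ (2 ^ e) = 1) (h1 : h ≠ 1) :
    ∃ j, (h ^ (2 ^ j)) ≠ 1 ∧ h ^ (2 ^ j) * h ^ (2 ^ j) = 1 := by
  classical
  have hex : ∃ e, h ^ (2 ^ e) = 1 := ⟨e, he⟩
  have hspec := Nat.find_spec hex
  obtain ⟨j, hj⟩ : ∃ j, Nat.find hex = j + 1 := by
    refine Nat.exists_eq_succ_of_ne_zero fun h0 => h1 ?_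
    rwa [h0, pow_zero, pow_one] at hspec
  refine ⟨j, Nat.find_min hex (by omega), ?_⟩
  rw [← pow_add, ← _root_.two_mul, ← pow_succ', ← hj]
  exact hspec

/-- `G` is `(f-1)`-transitive. -/
theorem sTrans (S : Setup G f) (A : Finset α) (hA : #A + 2 ≤ f) : STrans G A := by
  by_cases hA2 : #A + 3 ≤ f
  · exact S.sTrans_low A hA2
  by_contra hnt
  have h7 := S.seven
  have h2f := S.two_mul
  have hnot : ∀ B : Finset α, #B + 2 = f → ¬ STrans G B := by
    intro B hB hBt
    exact hnt (STrans.of_card_eq (k := f - 2) (fun C hC => S.sTrans_low C (by omega))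
      (by omega) (by omega) hBt)
  clear hA hA2 hnt A
  let φ : Fin (f - 2) ↪ α :=
    (Fin.castLEEmb (by omega : f - 2 ≤ Fintype.card α)).trans (Fintype.equivFin α).symm.toEmbedding
  let A : Finset α := univ.map φ
  have hA : #A + 2 = f := by rw [card_map, card_univ, Fintype.card_fin]; omega
  have hφ : ∀ i, φ i ∈ A := fun i => mem_map_of_mem _ (mem_univ i)
  obtain ⟨a, ha⟩ : ∃ a, a = φ ⟨0, by omega⟩ := ⟨_, rfl⟩
  obtain ⟨b, hb⟩ : ∃ a, a = φ ⟨1, by omega⟩ := ⟨_, rfl⟩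
  obtain ⟨c, hc⟩ : ∃ a, a = φ ⟨2, by omega⟩ := ⟨_, rfl⟩
  obtain ⟨d, hd⟩ : ∃ a, a = φ ⟨3, by omega⟩ := ⟨_, rfl⟩
  obtain ⟨e, he⟩ : ∃ a, a = φ ⟨4, by omega⟩ := ⟨_, rfl⟩
  have hab : a ≠ b := by rw [ha, hb]; exact φ.injective.ne (by simp)
  have hac : a ≠ c := by rw [ha, hc]; exact φ.injective.ne (by simp)
  have had : a ≠ d := by rw [ha, hd]; exact φ.injective.ne (by simp)
  have hae : a ≠ e := by rw [ha, he]; exact φ.injective.ne (by simp)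
  have hbc : b ≠ c := by rw [hb, hc]; exact φ.injective.ne (by simp)
  have hbd : b ≠ d := by rw [hb, hd]; exact φ.injective.ne (by simp)
  have hbe : b ≠ e := by rw [hb, he]; exact φ.injective.ne (by simp)
  have hcd : c ≠ d := by rw [hc, hd]; exact φ.injective.ne (by simp)
  have hce : c ≠ e := by rw [hc, he]; exact φ.injective.ne (by simp)
  have hde : d ≠ e := by rw [hd, he]; exact φ.injective.ne (by simp)
  have haA : a ∈ A := ha ▸ hφ _
  have hbA : b ∈ A := hb ▸ hφ _
  have hcA : c ∈ A := hc ▸ hφ _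
  have hdA : d ∈ A := hd ▸ hφ _
  have heA : e ∈ A := he ▸ hφ _
  clear ha hb hc hd he hφ
  clear_value A
  clear φ
  -- `G` induces on `A` the product `σ` of two transpositions, by `(f-2)`-transitivity
  obtain ⟨σ, hσ⟩ : ∃ σ, σ = swap a b * swap c d := ⟨_, rfl⟩
  have hσ2 : σ * σ = 1 := by
    have hcomm : Commute (swap a b) (swap c d) :=
      Perm.Disjoint.commute (Perm.disjoint_swap_swap (by simp [*]))
    rw [hσ, mul_assoc, ← mul_assoc (swap c d), ← hcomm.eq, mul_assoc (swap a b), swap_mul_self,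
      mul_one, swap_mul_self]
  have hσa : σ a = b := by
    rw [hσ, Perm.mul_apply, swap_apply_of_ne_of_ne hac had, swap_apply_left]
  have hσfix : ∀ x, x ≠ a → x ≠ b → x ≠ c → x ≠ d → σ x = x := by
    intro x h1 h2 h3 h4
    rw [hσ, Perm.mul_apply, swap_apply_of_ne_of_ne h3 h4, swap_apply_of_ne_of_ne h1 h2]
  have hσA : ∀ x ∈ A, σ x ∈ A := by
    intro x hx
    have hsw : ∀ u v, u ∈ A → v ∈ A → ∀ y ∈ A, swap u v y ∈ A := by
      intro u v hu hv y hy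
      rw [swap_apply_def]
      split_ifs <;> assumption
    rw [hσ, Perm.mul_apply]
    exact hsw a b haA hbA _ (hsw c d hcA hdA x hx)
  obtain ⟨g, hg, hgA⟩ := S.exists_eqOn_low A (by omega) σ
  -- `h` below is the 2-part of `g`; it still acts as `σ` on `A`
  obtain ⟨k, m, hm, hkm⟩ := Nat.exists_eq_two_pow_mul_odd (orderOf_pos g).ne'
  obtain ⟨h, hh⟩ : ∃ h, h = g ^ m := ⟨_, rfl⟩
  have hhG : h ∈ G := hh ▸ G.pow_mem hg m
  have hhk : h ^ (2 ^ k) = 1 := by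
    rw [hh, ← pow_mul, mul_comm, ← hkm, pow_orderOf_eq_one]
  have hhA : ∀ x ∈ A, h x = σ x := by
    intro x hx
    rw [hh, (pow_eqOn hσA hgA m x hx).1]
    obtain ⟨r, rfl⟩ := hm
    rw [pow_succ, pow_mul, pow_two, hσ2, one_pow, one_mul]
  have hh1 : h ≠ 1 := by
    intro h1
    have := hhA a haA
    rw [h1, hσa] at this
    exact hab this
  obtain ⟨j, hj1, hj2⟩ := exists_involution_pow h k hhk hh1
  -- otherwise an involution in `⟨h⟩` fixes `A` pointwise, contrary to `no_swap`
  have hj0 : j = 0 := by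
    by_contra hj0
    obtain ⟨i, rfl⟩ := Nat.exists_eq_succ_of_ne_zero hj0
    obtain ⟨u, hu⟩ : ∃ u, u = h ^ 2 ^ (i + 1) := ⟨_, rfl⟩
    have huA : ∀ x ∈ A, u x = x := by
      intro x hx
      rw [hu, (pow_eqOn hσA hhA _ x hx).1, pow_succ', pow_mul, pow_two, hσ2, one_pow,
        Perm.one_apply]
    rw [Nat.succ_eq_add_one, ← hu] at hj1 hj2
    obtain ⟨p, hp⟩ : ∃ p, u p ≠ p := by
      by_contra! hc
      exact hj1 (Equiv.ext hc)
    have hup : u (u p) = p := by rw [← Perm.mul_apply, hj2, Perm.one_apply]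
    have hpA : p ∉ A := fun hpA => hp (huA p hpA)
    have hupA : u p ∉ A := fun hpA => hp (by rw [huA _ hpA] at hup; exact hup)
    have hcard := card_erase_add_one haA
    exact S.no_swap hnot (C := A.erase a) (by omega) (a := p) (b := u p)
      (fun h => hpA (mem_of_mem_erase h)) (fun h => hupA (mem_of_mem_erase h)) hp.symm
      (s := u) (hu ▸ G.pow_mem hhG _) (fun x hx => huA x (mem_of_mem_erase hx)) rfl hup
  rw [hj0, pow_zero, pow_one] at hj2
  -- a further pair of points interchanged by `h`
  obtain ⟨p, hp⟩ : ∃ p, p ∉ insert a (insert b (insert c (insert d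
      (univ.filter (fun x => h x = x))))) := by
    apply exists_notMem_of_card_lt
    have hle := S.le (univ.filter (fun x => h x = x)) ⟨h, hhG, hh1, fun x hx => by simpa using hx⟩
    have := card_insert_le a (insert b (insert c (insert d (univ.filter (fun x => h x = x)))))
    have := card_insert_le b (insert c (insert d (univ.filter (fun x => h x = x))))
    have := card_insert_le c (insert d (univ.filter (fun x => h x = x)))
    have := card_insert_le d (univ.filter (fun x => h x = x))
    omega
  simp only [mem_insert, mem_filter, mem_univ, true_and, not_or] at hp
  obtain ⟨hpa, hpb, hpc, hpd, hhp⟩ := hp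
  have hhhp : h (h p) = p := by rw [← Perm.mul_apply, hj2, Perm.one_apply]
  have hpA : p ∉ A := fun hpA => hhp (by rw [hhA p hpA, hσfix p hpa hpb hpc hpd])
  have hqA : h p ∉ A := by
    intro hq
    apply hpA
    rw [← hhhp, hhA _ hq]
    exact hσA _ hq
  have hTcard : #(insert p (insert (h p) (A.erase e))) + 1 = f := by
    have := card_erase_add_one heA
    rw [card_insert_of_notMem, card_insert_of_notMem]
    · omega
    · exact fun h => hqA (mem_of_mem_erase h)
    · rw [mem_insert, not_or]
      exact ⟨fun h => hhp h.symm, fun h => hpA (mem_of_mem_erase h)⟩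
  refine S.not_agree_three hnot hTcard (a := a) (b := b) (c := c) (d := d) (e := p) (k := h p)
    ?_ ?_ ?_ ?_ (mem_insert_self _ _) (mem_insert_of_mem (mem_insert_self _ _)) hab hcd
    (Ne.symm hhp) ⟨h, hhG, ?_⟩
  · exact mem_insert_of_mem (mem_insert_of_mem (mem_erase.2 ⟨hae, haA⟩))
  · exact mem_insert_of_mem (mem_insert_of_mem (mem_erase.2 ⟨hbe, hbA⟩))
  · exact mem_insert_of_mem (mem_insert_of_mem (mem_erase.2 ⟨hce, hcA⟩))
  · exact mem_insert_of_mem (mem_insert_of_mem (mem_erase.2 ⟨hde, hdA⟩))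
  · intro x hx
    rw [← hσ, Perm.one_apply, Perm.mul_apply]
    have hne : ∀ y ∈ A, h p ≠ y := fun y hy h' => hqA (h' ▸ hy)
    rcases mem_insert.1 hx with rfl | hx
    · rw [swap_apply_left, hσfix _ (hne a haA) (hne b hbA) (hne c hcA) (hne d hdA)]
    rcases mem_insert.1 hx with rfl | hx
    · rw [swap_apply_right, hσfix _ hpa hpb hpc hpd, hhhp]
    · have hxA := mem_of_mem_erase hx
      have hxp : x ≠ p := fun h' => hpA (h' ▸ hxA)
      rw [swap_apply_of_ne_of_ne hxp (hne x hxA).symm, hhA x hxA]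

/-- `G` induces every permutation, and every injection, on sets of at most `f - 1` points. -/
theorem exists_eqOn' (S : Setup G f) (T : Finset α) (hT : #T + 1 ≤ f) (σ : Perm α) :
    ∃ g ∈ G, ∀ x ∈ T, g x = σ x :=
  exists_eqOn (k := f - 1) (fun C hC => S.sTrans C (by omega)) T (by omega) σ

end Setup

/-! ### Three coprime cycle lengths -/

section LargeDegree

open Equiv

variable {α : Type*} [Fintype α] [DecidableEq α] {G : Subgroup (Perm α)} {f : ℕ}

theorem pow_dvd_of_not_dvd_div {p i d N : ℕ} (hp : p.Prime) (hd : d ∣ N) (hpN : p ∣ N)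
    (hnd : ¬ d ∣ N / p) (hi : p ^ i ∣ N) : p ^ i ∣ d := by
  obtain ⟨e, rfl⟩ := hd
  have hpe : ¬ p ∣ e := by
    rintro ⟨m, rfl⟩
    apply hnd
    rw [show d * (p * m) = p * (d * m) by ring, Nat.mul_div_cancel_left _ hp.pos]
    exact dvd_mul_right _ _
  exact (Nat.Coprime.pow_left i ((Nat.Prime.coprime_iff_not_dvd hp).2 hpe)).dvd_of_dvd_mul_right hi

theorem dvd_div_of_coprime {x q N : ℕ} (hq : q ∣ N) (hx : x ∣ N) (h : Nat.Coprime x q)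
    (hq0 : 0 < q) : x ∣ N / q := by
  obtain ⟨M, rfl⟩ := hq
  rw [Nat.mul_div_cancel_left _ hq0]
  exact h.dvd_of_dvd_mul_left hx

theorem pow_apply_of_dvd {g : Perm α} {w : α} {a b : ℕ} (h : a ∣ b) (ha : (g ^ a) w = w) :
    (g ^ b) w = w := by
  obtain ⟨c, rfl⟩ := h
  rw [pow_mul]
  exact Perm.pow_apply_eq_self_of_apply_eq_self ha c

/-- The length `d` of the cycle of `g` through a point `w` outside an invariant set `T`. -/
theorem exists_period (g : Perm α) (T : Finset α) (hT : ∀ x ∈ T, g x ∈ T) (w : α) (hw : w ∉ T) :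
    ∃ d, 0 < d ∧ d + #T ≤ Fintype.card α ∧ ∀ m, (g ^ m) w = w ↔ d ∣ m := by
  have key : ∀ m, (g ^ m) w = w ↔ Function.minimalPeriod g w ∣ m := by
    intro m
    rw [← Function.isPeriodicPt_iff_minimalPeriod_dvd, Function.IsPeriodicPt,
      Function.IsFixedPt, Perm.iterate_eq_pow]
  have hinv : T.image g = T := by
    apply eq_of_subset_of_card_le
    · intro y hy
      obtain ⟨x, hx, rfl⟩ := mem_image.1 hy
      exact hT x hx
    · rw [card_image_of_injective _ g.injective]
  have hout : ∀ m, (g ^ m) w ∉ T := by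
    intro m
    induction m with
    | zero => exact hw
    | succ m ih =>
      rw [pow_succ', Perm.mul_apply]
      intro h
      rw [← hinv] at h
      obtain ⟨x, hx, hxe⟩ := mem_image.1 h
      exact ih (g.injective hxe ▸ hx)
  refine ⟨Function.minimalPeriod g w, ?_, ?_, key⟩
  · apply Function.minimalPeriod_pos_of_mem_periodicPts
    refine ⟨orderOf g, orderOf_pos g, ?_⟩
    rw [Function.IsPeriodicPt, Function.IsFixedPt, Perm.iterate_eq_pow, pow_orderOf_eq_one,
      Perm.one_apply]
  · have h1 : #((range (Function.minimalPeriod g w)).image (fun m => (g ^ m) w)) =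
        Function.minimalPeriod g w := by
      rw [card_image_of_injOn, card_range]
      intro a ha b hb hab
      have := Function.iterate_injOn_Iio_minimalPeriod (f := g) (x := w)
      apply this (by simpa using ha) (by simpa using hb)
      simpa [Perm.iterate_eq_pow] using hab
    have h2 : Disjoint ((range (Function.minimalPeriod g w)).image (fun m => (g ^ m) w)) T := by
      rw [disjoint_left]
      intro y hy
      obtain ⟨m, -, rfl⟩ := mem_image.1 hy
      exact hout m
    rw [← h1, ← card_union_of_disjoint h2, ← card_univ]
    exact card_le_card (subset_univ _)

theorem pow_apply_of_cycleType {σ : Perm α} (w : α) (hw : σ w ≠ w) :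
    ∃ ℓ ∈ σ.cycleType, (σ ^ ℓ) w = w := by
  refine ⟨#(σ.cycleOf w).support, ?_, ?_⟩
  · rw [Perm.cycleType_def, Multiset.mem_map]
    refine ⟨σ.cycleOf w, ?_, rfl⟩
    exact Perm.cycleOf_mem_cycleFactorsFinset_iff.2 (Perm.mem_support.2 hw)
  · rw [← Perm.cycleOf_pow_apply_self, ← (Perm.isCycle_cycleOf σ hw).orderOf, pow_orderOf_eq_one,
      Perm.one_apply]

/-- Let `g ∈ G` act on an `(f-1)`-set `T` with cycles of lengths `p ^ i`, `q ^ j`, `r ^ k` and fixed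
points. Every point of `T` is fixed by two of the powers of `g` of prime orders `p`, `q`, `r`. Every
other point is fixed by at least one of them, since otherwise the length of its cycle would be
divisible by the product of the three prime powers. This gives at least `n + f - 1` fixed points,
more than `3 f`. -/
theorem Setup.three_primes (S : Setup G f) {p q r i j k : ℕ} (hp : p.Prime) (hq : q.Prime)
    (hr : r.Prime) (hpq : p ≠ q) (hpr : p ≠ r) (hqr : q ≠ r) (hi : i ≠ 0) (hj : j ≠ 0) (hk : k ≠ 0)
    (hsum : p ^ i + q ^ j + r ^ k + 1 ≤ f)
    (hprod : Fintype.card α + 1 < p ^ i * q ^ j * r ^ k + f) : False := by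
  classical
  have h2f := S.two_mul
  have hxy : Nat.Coprime (p ^ i) (q ^ j) := Nat.Coprime.pow _ _ ((Nat.coprime_primes hp hq).2 hpq)
  have hxz : Nat.Coprime (p ^ i) (r ^ k) := Nat.Coprime.pow _ _ ((Nat.coprime_primes hp hr).2 hpr)
  have hyz : Nat.Coprime (q ^ j) (r ^ k) := Nat.Coprime.pow _ _ ((Nat.coprime_primes hq hr).2 hqr)
  have hpx : p ∣ p ^ i := dvd_pow_self p hi
  have hqy : q ∣ q ^ j := dvd_pow_self q hj
  have hrz : r ∣ r ^ k := dvd_pow_self r hk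
  have hx2 : 2 ≤ p ^ i := hp.two_le.trans (Nat.le_of_dvd (pow_pos hp.pos _) hpx)
  have hy2 : 2 ≤ q ^ j := hq.two_le.trans (Nat.le_of_dvd (pow_pos hq.pos _) hqy)
  have hz2 : 2 ≤ r ^ k := hr.two_le.trans (Nat.le_of_dvd (pow_pos hr.pos _) hrz)
  have hprod' : ∀ d, p ^ i ∣ d → q ^ j ∣ d → r ^ k ∣ d → 0 < d → p ^ i * q ^ j * r ^ k ≤ d := by
    intro d h1 h2 h3 h0
    exact Nat.le_of_dvd h0 (Nat.Coprime.mul_dvd_of_dvd_of_dvd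
      (Nat.Coprime.mul_left hxz hyz) (Nat.Coprime.mul_dvd_of_dvd_of_dvd hxy h1 h2) h3)
  have hpi : ∀ d N, d ∣ N → p ^ i ∣ N → ¬ d ∣ N / p → p ^ i ∣ d :=
    fun d N h1 h2 h3 => pow_dvd_of_not_dvd_div hp h1 (hpx.trans h2) h3 h2
  have hqj : ∀ d N, d ∣ N → q ^ j ∣ N → ¬ d ∣ N / q → q ^ j ∣ d :=
    fun d N h1 h2 h3 => pow_dvd_of_not_dvd_div hq h1 (hqy.trans h2) h3 h2
  have hrk : ∀ d N, d ∣ N → r ^ k ∣ N → ¬ d ∣ N / r → r ^ k ∣ d :=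
    fun d N h1 h2 h3 => pow_dvd_of_not_dvd_div hr h1 (hrz.trans h2) h3 h2
  generalize p ^ i = x at *
  generalize q ^ j = y at *
  generalize r ^ k = z at *
  obtain ⟨σ, hσ⟩ := (Equiv.Perm.exists_with_cycleType_iff α (m := {x, y, z})).2
    ⟨by simp; omega, by simp; omega⟩
  have hσsupp : #σ.support = x + y + z := by
    rw [← Perm.sum_cycleType, hσ]; simp; ring
  obtain ⟨T, hsT, -, hT⟩ := exists_subsuperset_card_eq (subset_univ σ.support) (n := f - 1)
    (by omega) (by rw [card_univ]; omega)
  have hσT : ∀ w ∈ T, σ w ∈ T := by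
    intro w hw
    by_cases h : σ w = w
    · rwa [h]
    · exact hsT (Perm.apply_mem_support.2 (Perm.mem_support.2 h))
  obtain ⟨g, hg, hgT⟩ := S.exists_eqOn' T (by omega) σ
  have hgT' : ∀ w ∈ T, g w ∈ T := fun w hw => by rw [hgT w hw]; exact hσT w hw
  obtain ⟨N, hN⟩ : ∃ N, N = orderOf g := ⟨_, rfl⟩
  have hN0 : 0 < N := hN ▸ orderOf_pos g
  have hσN : orderOf σ ∣ N := by
    apply orderOf_dvd_of_pow_eq_one
    ext w
    by_cases hw : w ∈ T
    · rw [← (Setup.pow_eqOn hσT hgT N w hw).1, hN, pow_orderOf_eq_one]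
    · have h1 : σ w = w := by
        by_contra h
        exact hw (hsT (Perm.mem_support.2 h))
      rw [Perm.pow_apply_eq_self_of_apply_eq_self h1, Perm.one_apply]
  have hxN : x ∣ N := (Perm.dvd_of_mem_cycleType (by rw [hσ]; simp)).trans hσN
  have hyN : y ∣ N := (Perm.dvd_of_mem_cycleType (by rw [hσ]; simp)).trans hσN
  have hzN : z ∣ N := (Perm.dvd_of_mem_cycleType (by rw [hσ]; simp)).trans hσN
  have hF : ∀ ℓ : ℕ, ℓ.Prime → ℓ ∣ N → #(univ.filter (fun w => (g ^ (N / ℓ)) w = w)) ≤ f := by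
    intro ℓ hℓ hℓN
    apply S.le
    refine ⟨g ^ (N / ℓ), G.pow_mem hg _, ?_, fun a ha => by simpa using ha⟩
    apply pow_ne_one_of_lt_orderOf
    · exact (Nat.div_pos (Nat.le_of_dvd hN0 hℓN) hℓ.pos).ne'
    · rw [← hN]; exact Nat.div_lt_self hN0 hℓ.one_lt
  have hFp := hF p hp (hpx.trans hxN)
  have hFq := hF q hq (hqy.trans hyN)
  have hFr := hF r hr (hrz.trans hzN)
  have hin : ∀ w ∈ T,
      (g ^ x) w = w ∨ (g ^ y) w = w ∨ (g ^ z) w = w := by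
    intro w hw
    have hpow := fun m => (Setup.pow_eqOn hσT hgT m w hw).1
    rw [hpow, hpow, hpow]
    by_cases h : σ w = w
    · left; exact Perm.pow_apply_eq_self_of_apply_eq_self h _
    · obtain ⟨ℓ, hℓ, h⟩ := pow_apply_of_cycleType w h
      rw [hσ] at hℓ
      simp only [Multiset.insert_eq_cons, Multiset.mem_cons, Multiset.mem_singleton] at hℓ
      rcases hℓ with rfl | rfl | rfl <;> tauto
  -- each point of `T` is fixed by two of the three powers, every other point by at least one
  have hcount : ∀ w, (if w ∈ T then 2 else 1) ≤ (if (g ^ (N / p)) w = w then 1 else 0) +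
      (if (g ^ (N / q)) w = w then 1 else 0) + (if (g ^ (N / r)) w = w then 1 else 0) := by
    intro w
    by_cases hw : w ∈ T
    · rw [if_pos hw]
      have c1 : ∀ a b, Nat.Coprime a b → ∀ c, c ∣ b → Nat.Coprime a c :=
        fun a b h c hc => Nat.Coprime.coprime_dvd_right hc h
      rcases hin w hw with h | h | h
      · rw [if_pos (pow_apply_of_dvd
            (dvd_div_of_coprime (hqy.trans hyN) hxN (c1 _ _ hxy _ hqy) hq.pos) h),
          if_pos (pow_apply_of_dvd
            (dvd_div_of_coprime (hrz.trans hzN) hxN (c1 _ _ hxz _ hrz) hr.pos) h)]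
        omega
      · rw [if_pos (pow_apply_of_dvd
            (dvd_div_of_coprime (hpx.trans hxN) hyN (c1 _ _ hxy.symm _ hpx) hp.pos) h),
          if_pos (pow_apply_of_dvd
            (dvd_div_of_coprime (hrz.trans hzN) hyN (c1 _ _ hyz _ hrz) hr.pos) h)]
        omega
      · rw [if_pos (pow_apply_of_dvd
            (dvd_div_of_coprime (hpx.trans hxN) hzN (c1 _ _ hxz.symm _ hpx) hp.pos) h),
          if_pos (pow_apply_of_dvd
            (dvd_div_of_coprime (hqy.trans hyN) hzN (c1 _ _ hyz.symm _ hqy) hq.pos) h)]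
        omega
    · rw [if_neg hw]
      obtain ⟨d, hd0, hdT, hd⟩ := exists_period g T hgT' w hw
      have hdN : d ∣ N := (hd N).1 (by rw [hN, pow_orderOf_eq_one, Perm.one_apply])
      by_contra hlt
      have hnp : ¬ d ∣ N / p := fun h => by rw [← hd] at h; rw [if_pos h] at hlt; omega
      have hnq : ¬ d ∣ N / q := fun h => by rw [← hd] at h; rw [if_pos h] at hlt; omega
      have hnr : ¬ d ∣ N / r := fun h => by rw [← hd] at h; rw [if_pos h] at hlt; omega
      have := hprod' d (hpi d N hdN hxN hnp) (hqj d N hdN hyN hnq) (hrk d N hdN hzN hnr) hd0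
      omega
  have hsum' := sum_le_sum fun w (_ : w ∈ (univ : Finset α)) => hcount w
  rw [sum_add_distrib, sum_add_distrib, ← card_filter, ← card_filter, ← card_filter] at hsum'
  have hleft : ∑ w : α, (if w ∈ T then 2 else 1) = Fintype.card α + #T := by
    have : ∀ w, (if w ∈ T then 2 else 1) = 1 + if w ∈ T then 1 else 0 := by
      intro w; split_ifs <;> rfl
    rw [sum_congr rfl fun w _ => this w, sum_add_distrib, ← card_filter]
    simp
  rw [hleft] at hsum'
  omega

end LargeDegree

/-! ### Order bounds and large degree -/

section Bounds

open Equiv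

variable {α : Type*} [Fintype α] [DecidableEq α] {G : Subgroup (Perm α)} {f : ℕ}

/-- If only the identity of `G` fixes more than `f` points, then `|G| ≤ n (n - 1) ⋯ (n - f)`, while
the universal transversal property bounds `|G|` from below by a binomial coefficient. -/
theorem HasUTP.choose_le_descFactorial (hU : HasUTP G) (hle : ∀ A, Nt G A → #A ≤ f)
    (hf : f + 1 ≤ Fintype.card α) :
    (Fintype.card α).choose (Fintype.card α / 2) ≤
      (Fintype.card α).descFactorial (f + 1) * (Fintype.card α / 2 + 1) := by
  obtain ⟨A, -, hA⟩ := exists_subset_card_eq (s := (univ : Finset α)) (n := f + 1)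
    (by rw [card_univ]; omega)
  have h1 := hU.choose_le (Fintype.card α / 2) (by omega)
  have h2 := card_le_descFactorial G A
  rw [card_ptStab_eq_one (fun h => by have := hle A h; omega), hA, mul_one] at h2
  exact h1.trans (Nat.mul_le_mul_right _ h2)

theorem two_pow_le_choose (n : ℕ) : 2 ^ n ≤ (n + 1) * n.choose (n / 2) := by
  rw [← Nat.sum_range_choose]
  refine (sum_le_card_nsmul _ _ _ fun i _ => Nat.choose_le_middle i n).trans ?_
  rw [card_range, smul_eq_mul]

/-- A logarithmic form of `HasUTP.choose_le_descFactorial`, with `m + 1` an upper bound for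
`log₂ n`. -/
theorem HasUTP.lt_mul (hU : HasUTP G) (hle : ∀ A, Nt G A → #A ≤ f)
    (hf : f + 1 ≤ Fintype.card α) {m : ℕ} (hm : Fintype.card α < 2 ^ (m + 1)) :
    Fintype.card α + 1 < (m + 1) * (f + 3) := by
  have h1 := hU.choose_le_descFactorial hle hf
  have h2 := two_pow_le_choose (Fintype.card α)
  generalize Fintype.card α = n at *
  have h3 : n.descFactorial (f + 1) ≤ n ^ (f + 1) := Nat.descFactorial_le_pow _ _
  have h4 : n ^ (f + 1) < (2 ^ (m + 1)) ^ (f + 1) := Nat.pow_lt_pow_left hm (by omega)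
  have h5 : n / 2 + 1 ≤ 2 ^ m := by rw [pow_succ] at hm; omega
  have h6 : 2 ^ n < 2 ^ (m + 1) * ((2 ^ (m + 1)) ^ (f + 1) * 2 ^ m) := by
    calc 2 ^ n ≤ (n + 1) * n.choose (n / 2) := h2
      _ ≤ (n + 1) * (n.descFactorial (f + 1) * (n / 2 + 1)) := Nat.mul_le_mul_left _ h1
      _ ≤ (n + 1) * (n ^ (f + 1) * (n / 2 + 1)) := by gcongr
      _ < (n + 1) * ((2 ^ (m + 1)) ^ (f + 1) * (n / 2 + 1)) := by gcongr
      _ ≤ 2 ^ (m + 1) * ((2 ^ (m + 1)) ^ (f + 1) * 2 ^ m) := by gcongr; omega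
  rw [← pow_mul, ← pow_add, ← pow_add] at h6
  have h7 := (Nat.pow_lt_pow_iff_right (by norm_num : 1 < 2)).1 h6
  nlinarith

theorem HasUTP.seven_le (hU : HasUTP G) (hle : ∀ A, Nt G A → #A ≤ f)
    (hf : f + 1 ≤ Fintype.card α) (hn : 256 ≤ Fintype.card α) : 7 ≤ f := by
  by_contra hlt
  have h1 := Nat.pow_log_le_self 2 (show Fintype.card α ≠ 0 by omega)
  have h2 := hU.lt_mul hle hf (Nat.lt_pow_succ_log_self (b := 2) (by norm_num) (Fintype.card α))
  have h8 : 8 ≤ Nat.log 2 (Fintype.card α) := (Nat.le_log_iff_pow_le (by norm_num) (by omega)).2 hn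
  generalize Nat.log 2 (Fintype.card α) = m at *
  have h9 : (m + 1) * (f + 3) ≤ (m + 1) * 9 := Nat.mul_le_mul_left _ (by omega)
  have h3 : (m + 1) * 9 ≤ 2 ^ m := by
    clear h1 h2 h9
    induction m, h8 using Nat.le_induction with
    | base => norm_num
    | succ m hm ih => rw [pow_succ]; omega
  omega

/-- With `2 * 8 ^ a ≤ n < 16 * 8 ^ a` and `HasUTP.lt_mul`, this yields `24 * 2 ^ a < f`. -/
theorem numeric_bound {a : ℕ} (ha : 4 ≤ a) : (3 * a + 4) * (24 * 2 ^ a + 3) ≤ 2 * 8 ^ a := by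
  have h1 : 3 * a + 4 ≤ 2 ^ a := by
    induction a, ha using Nat.le_induction with
    | base => norm_num
    | succ a ha ih => rw [pow_succ]; omega
  have h2 : 2 ^ 4 ≤ 2 ^ a := Nat.pow_le_pow_right (by norm_num) ha
  have h3 : 8 ^ a = 2 ^ a * 2 ^ a * 2 ^ a := by
    rw [← mul_pow, ← mul_pow]; norm_num
  rw [h3]
  generalize 2 ^ a = P at *
  calc (3 * a + 4) * (24 * P + 3) ≤ P * (2 * P * P) := Nat.mul_le_mul h1 (by nlinarith)
    _ = 2 * (P * P * P) := by ring

/-- For `n ≥ 256`, powers of three small primes contradict `Setup.three_primes`. -/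
theorem Setup.false_of_large (S : Setup G f) (hn : 256 ≤ Fintype.card α) : False := by
  obtain ⟨m, hm⟩ : ∃ m, m = Nat.log 2 (Fintype.card α) := ⟨_, rfl⟩
  have h1 : 2 ^ m ≤ Fintype.card α := hm ▸ Nat.pow_log_le_self 2 (by omega)
  have h2 : Fintype.card α < 2 ^ (m + 1) := hm ▸ Nat.lt_pow_succ_log_self (by norm_num) _
  have h2f := S.two_mul
  have h3 := S.utp.lt_mul S.le (by omega) h2
  have hm8 : 8 ≤ m := by
    by_contra h
    have := Nat.pow_le_pow_right (n := 2) (by norm_num) (show m + 1 ≤ 8 by omega)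
    omega
  clear hm
  rcases (by omega : m = 8 ∨ m = 9 ∨ m = 10 ∨ m = 11 ∨ m = 12 ∨ 13 ≤ m) with
    rfl | rfl | rfl | rfl | rfl | hm
  · exact S.three_primes (p := 7) (q := 2) (r := 3) (i := 1) (j := 3) (k := 2)
      (by norm_num) (by norm_num) (by norm_num) (by norm_num) (by norm_num) (by norm_num)
      (by norm_num) (by norm_num) (by norm_num) (by omega) (by omega)
  · exact S.three_primes (p := 7) (q := 11) (r := 13) (i := 1) (j := 1) (k := 1)
      (by norm_num) (by norm_num) (by norm_num) (by norm_num) (by norm_num) (by norm_num)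
      (by norm_num) (by norm_num) (by norm_num) (by omega) (by omega)
  · exact S.three_primes (p := 11) (q := 13) (r := 2) (i := 1) (j := 1) (k := 4)
      (by norm_num) (by norm_num) (by norm_num) (by norm_num) (by norm_num) (by norm_num)
      (by norm_num) (by norm_num) (by norm_num) (by omega) (by omega)
  · exact S.three_primes (p := 2) (q := 3) (r := 5) (i := 4) (j := 3) (k := 2)
      (by norm_num) (by norm_num) (by norm_num) (by norm_num) (by norm_num) (by norm_num)
      (by norm_num) (by norm_num) (by norm_num) (by omega) (by omega)
  · exact S.three_primes (p := 2) (q := 3) (r := 5) (i := 4) (j := 3) (k := 3)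
      (by norm_num) (by norm_num) (by norm_num) (by norm_num) (by norm_num) (by norm_num)
      (by norm_num) (by norm_num) (by norm_num) (by omega) (by omega)
  -- powers of 2, 3 and 5 of size about `8 * 2 ^ a`, where `8 ^ a` has the order of magnitude of `n`
  · obtain ⟨a, c, hc1, hc2, rfl⟩ : ∃ a c, 1 ≤ c ∧ c ≤ 3 ∧ m = 3 * a + c :=
      ⟨(m - 1) / 3, m - 3 * ((m - 1) / 3), by omega, by omega, by omega⟩
    have ha : 4 ≤ a := by omega
    have hb := numeric_bound ha
    have h8 : (8 : ℕ) ^ a = 2 ^ (3 * a) := by rw [pow_mul]; norm_num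
    have hlow : 2 * 8 ^ a ≤ Fintype.card α := by
      refine le_trans ?_ h1
      rw [h8, ← pow_succ']
      exact Nat.pow_le_pow_right (by norm_num) (by omega)
    have hup : Fintype.card α < 16 * 8 ^ a := by
      refine h2.trans_le ?_
      rw [h8, show (16 : ℕ) = 2 ^ 4 by norm_num, ← pow_add]
      exact Nat.pow_le_pow_right (by norm_num) (by omega)
    have hf : 24 * 2 ^ a + 1 ≤ f := by
      by_contra hlt
      have h4 : (3 * a + c + 1) * (f + 3) ≤ (3 * a + 4) * (24 * 2 ^ a + 3) :=
        Nat.mul_le_mul (by omega) (by omega)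
      omega
    have hP : 2 ^ 4 ≤ 2 ^ a := Nat.pow_le_pow_right (by norm_num) ha
    have hj : 2 ^ (a + 3) = 8 * 2 ^ a := by rw [pow_add]; ring
    have h3l : 3 ^ Nat.log 3 (2 ^ (a + 3)) ≤ 2 ^ (a + 3) := Nat.pow_log_le_self 3 (by positivity)
    have h3u : 2 ^ (a + 3) < 3 ^ (Nat.log 3 (2 ^ (a + 3)) + 1) :=
      Nat.lt_pow_succ_log_self (by norm_num) _
    have h5l : 5 ^ Nat.log 5 (2 ^ (a + 3)) ≤ 2 ^ (a + 3) := Nat.pow_log_le_self 5 (by positivity)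
    have h5u : 2 ^ (a + 3) < 5 ^ (Nat.log 5 (2 ^ (a + 3)) + 1) :=
      Nat.lt_pow_succ_log_self (by norm_num) _
    refine S.three_primes (p := 2) (q := 3) (r := 5) (i := a + 3) (j := Nat.log 3 (2 ^ (a + 3)))
      (k := Nat.log 5 (2 ^ (a + 3))) (by norm_num) (by norm_num) (by norm_num) (by norm_num)
      (by norm_num) (by norm_num) (by omega) ?_ ?_ (by omega) ?_
    · exact (Nat.log_pos (by norm_num) (by omega)).ne'
    · exact (Nat.log_pos (by norm_num) (by omega)).ne'
    · rw [pow_succ 3] at h3u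
      rw [pow_succ 5] at h5u
      have h9 : 8 ^ a = 2 ^ a * 2 ^ a * 2 ^ a := by rw [← mul_pow, ← mul_pow]; norm_num
      generalize 3 ^ Nat.log 3 (2 ^ (a + 3)) = y at *
      generalize 5 ^ Nat.log 5 (2 ^ (a + 3)) = z at *
      rw [hj] at *
      generalize 2 ^ a = P at *
      have h10 : (8 * P) * ((8 * P) * (8 * P)) ≤ (8 * P) * ((y * 3) * (z * 5)) :=
        Nat.mul_le_mul_left _ (Nat.mul_le_mul h3u.le h5u.le)
      have h11 : (8 * P) * ((8 * P) * (8 * P)) = 512 * (P * P * P) := by ring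
      have h12 : (8 * P) * ((y * 3) * (z * 5)) = 15 * (8 * P * y * z) := by ring
      omega

end Bounds

/-! ### Prime cycles and their normalizers -/

section PrimeCycle

open Equiv

variable {α : Type*} [Fintype α] [DecidableEq α] {G : Subgroup (Perm α)}

open Pointwise in
/-- Sylow conjugacy for subgroups of order `p`. -/
theorem conj_of_prime_order {H : Type*} [Group H] [Finite H] {p : ℕ} (hp : p.Prime)
    (h2 : ¬ p ^ 2 ∣ Nat.card H) {x y : H} (hx : orderOf x = p) (hy : orderOf y = p) :
    ∃ k : H, k * y * k⁻¹ ∈ Subgroup.zpowers x := by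
  have := Fact.mk hp
  have hf : (Nat.card H).factorization p = 1 := by
    apply le_antisymm
    · by_contra h
      exact h2 ((hp.pow_dvd_iff_le_factorization Nat.card_pos.ne').2 (by omega))
    · apply (hp.pow_dvd_iff_le_factorization Nat.card_pos.ne').1
      rw [pow_one, ← hx]
      exact orderOf_dvd_natCard x
  let P : Sylow p H := Sylow.ofCard (Subgroup.zpowers x) (by rw [Nat.card_zpowers, hx, hf, pow_one])
  let Q : Sylow p H := Sylow.ofCard (Subgroup.zpowers y) (by rw [Nat.card_zpowers, hy, hf, pow_one])
  obtain ⟨k, hk⟩ := MulAction.exists_smul_eq H Q P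
  refine ⟨k, ?_⟩
  have h1 : k * y * k⁻¹ ∈ (k • Q : Sylow p H) := by
    have : (MulAut.conj k) • y ∈ (MulAut.conj k) • Q.toSubgroup :=
      Subgroup.smul_mem_pointwise_smul _ _ _ (Subgroup.mem_zpowers y)
    exact this
  rw [hk] at h1
  exact h1

/-- As `n < 2 p`, the Sylow `p`-subgroups have order at most `p`. -/
theorem not_sq_dvd_card {p : ℕ} (hp : p.Prime) (hn : Fintype.card α < 2 * p)
    (H : Subgroup (Perm α)) : ¬ p ^ 2 ∣ Nat.card H := by
  intro h
  have h1 : p ^ 2 ∣ (Fintype.card α).factorial := by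
    have := h.trans (Subgroup.card_subgroup_dvd_card H)
    rwa [Nat.card_eq_fintype_card, Fintype.card_perm] at this
  have hlog : Nat.log p (Fintype.card α) < 2 := by
    apply Nat.log_lt_of_lt_pow' (by norm_num)
    have := hp.two_le
    nlinarith
  rw [Nat.Prime.pow_dvd_factorial_iff hp hlog] at h1
  simp only [Nat.Ico_succ_singleton, sum_singleton, pow_one] at h1
  have : Fintype.card α / p < 2 := by rw [Nat.div_lt_iff_lt_mul hp.pos]; omega
  omega

/-- If `G` contains a `p`-cycle `c` with fixed point set `Z`, then every permutation of `Z` that is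
induced by `G` is induced by an element of the normalizer of `⟨c⟩` (Frattini argument). -/
theorem exists_normalizing {p : ℕ} (hp : p.Prime) (hn : Fintype.card α < 2 * p) {c : Perm α}
    (hc : c ∈ G) (hcp : orderOf c = p) {Z : Finset α} (hcZ : ∀ z ∈ Z, c z = z) {g σ : Perm α}
    (hg : g ∈ G) (hgσ : ∀ z ∈ Z, g z = σ z) (hσ : ∀ z ∈ Z, ∃ z' ∈ Z, σ z' = z) :
    ∃ a ∈ G, (∀ z ∈ Z, a z = σ z) ∧ ∃ m : ℤ, a * c * a⁻¹ = c ^ m := by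
  have hyZ : g * c * g⁻¹ ∈ ptStab G Z := by
    refine mem_ptStab.2 ⟨G.mul_mem (G.mul_mem hg hc) (G.inv_mem hg), fun z hz => ?_⟩
    obtain ⟨z', hz', rfl⟩ := hσ z hz
    rw [← hgσ z' hz', Perm.mul_apply, Perm.mul_apply, perm_inv_apply, hcZ z' hz']
  let x : ptStab G Z := ⟨c, mem_ptStab.2 ⟨hc, hcZ⟩⟩
  let y : ptStab G Z := ⟨g * c * g⁻¹, hyZ⟩
  have hx : orderOf x = p := by rw [← hcp, Subgroup.orderOf_mk]
  have hy : orderOf y = p := by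
    rw [← hcp, Subgroup.orderOf_mk]
    have := MulEquiv.orderOf_eq (MulAut.conj g) c
    simpa using this
  obtain ⟨k, hk⟩ := conj_of_prime_order hp (not_sq_dvd_card hp hn (ptStab G Z)) hx hy
  obtain ⟨m, hm⟩ := Subgroup.mem_zpowers_iff.1 hk
  have hkG := mem_ptStab.1 k.2
  refine ⟨k * g, G.mul_mem hkG.1 hg, fun z hz => ?_, m, ?_⟩
  · rw [Perm.mul_apply, hgσ z hz]
    apply hkG.2
    have himg : Z ⊆ Z.image σ := fun w hw => by
      obtain ⟨z', h1, h2⟩ := hσ w hw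
      exact mem_image.2 ⟨z', h1, h2⟩
    rw [eq_of_subset_of_card_le himg card_image_le]
    exact mem_image_of_mem _ hz
  · have := congrArg Subtype.val hm
    simp only [x, y, Subgroup.coe_zpow, Subgroup.coe_mul, Subgroup.coe_inv] at this
    rw [this]
    group

/-- If `G` is `(n - p)`-transitive and its order is divisible by the prime `p`, where
`n / 2 < p ≤ n - 3`, then it contains a nonidentity element moving three points only, the `p`-th
power of a commutator of two elements normalizing a `p`-cycle. -/
theorem false_of_prime {p : ℕ} (hp : p.Prime) (hn : Fintype.card α < 2 * p)
    (hp3 : p + 3 ≤ Fintype.card α) (h5 : 5 ≤ p) (hpG : p ∣ Nat.card G)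
    (hZ : ∀ Z : Finset α, #Z + p = Fintype.card α → ∀ σ : Perm α, ∃ g ∈ G, ∀ x ∈ Z, g x = σ x)
    (hle : ∀ A, Nt G A → #A + 3 < Fintype.card α) : False := by
  have := Fact.mk hp
  obtain ⟨⟨c, hcG⟩, hc⟩ := exists_prime_orderOf_dvd_card' p hpG
  rw [Subgroup.orderOf_mk] at hc
  obtain ⟨r, hr⟩ := Perm.cycleType_prime_order (σ := c) (by rwa [hc])
  have hsum := Perm.sum_cycleType c
  have hcard : #c.support ≤ Fintype.card α := card_le_univ _
  rw [hr, Multiset.sum_replicate, hc, smul_eq_mul] at hsum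
  have hr0 : r = 0 := by
    by_contra h
    have : 2 * p ≤ (r + 1) * p := Nat.mul_le_mul_right _ (by omega)
    omega
  subst hr0
  rw [zero_add, one_mul] at hsum
  have hcyc : c.IsCycle := by
    rw [← Perm.card_cycleType_eq_one, hr]; simp
  obtain ⟨Z, hZdef⟩ : ∃ Z, Z = c.supportᶜ := ⟨_, rfl⟩
  have hZc : #Z + p = Fintype.card α := by
    rw [hZdef, card_compl]; omega
  have hmemZ : ∀ z, z ∈ Z ↔ c z = z := by
    intro z; rw [hZdef, mem_compl, Perm.notMem_support]
  obtain ⟨z1, h1, z2, h2, z3, h3, h12, h13, h23⟩ := two_lt_card.1 (show 2 < #Z by omega)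
  have hswap : ∀ u v, u ∈ Z → v ∈ Z → ∀ z ∈ Z, swap u v z ∈ Z := by
    intro u v hu hv y hy
    rw [swap_apply_def]
    split_ifs <;> assumption
  have hnorm : ∀ u v, u ∈ Z → v ∈ Z → ∃ a ∈ G, (∀ z ∈ Z, a z = swap u v z) ∧
      ∃ m : ℤ, a * c * a⁻¹ = c ^ m := by
    intro u v hu hv
    obtain ⟨g, hg, hgσ⟩ := hZ Z hZc (swap u v)
    exact exists_normalizing hp hn hcG hc (fun z hz => (hmemZ z).1 hz) hg hgσ
      fun z hz => ⟨swap u v z, hswap u v hu hv z hz, swap_apply_self _ _ _⟩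
  obtain ⟨a, haG, haZ, m, ham⟩ := hnorm z1 z2 h1 h2
  obtain ⟨b, hbG, hbZ, l, hbl⟩ := hnorm z1 z3 h1 h3
  have hinv : ∀ (d : Perm α) (u v : α), u ∈ Z → v ∈ Z → (∀ z ∈ Z, d z = swap u v z) →
      ∀ z ∈ Z, d⁻¹ z = swap u v z := by
    intro d u v hu hv hd z hz
    rw [Perm.inv_eq_iff_eq, hd _ (hswap u v hu hv z hz), swap_apply_self]
  have haZ' := hinv a z1 z2 h1 h2 haZ
  have hbZ' := hinv b z1 z3 h1 h3 hbZ
  obtain ⟨u, hu⟩ : ∃ u, u = (b * a)⁻¹ * (a * b) := ⟨_, rfl⟩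
  have huG : u ∈ G := by
    rw [hu]; exact G.mul_mem (G.inv_mem (G.mul_mem hbG haG)) (G.mul_mem haG hbG)
  have hcomm : u * c = c * u := by
    have e1 : (a * b) * c * (a * b)⁻¹ = c ^ (m * l) := by
      calc (a * b) * c * (a * b)⁻¹ = a * (b * c * b⁻¹) * a⁻¹ := by group
        _ = c ^ (m * l) := by rw [hbl, ← conj_zpow, ham, zpow_mul]
    have e2 : (b * a) * c * (b * a)⁻¹ = c ^ (m * l) := by
      calc (b * a) * c * (b * a)⁻¹ = b * (a * c * a⁻¹) * b⁻¹ := by group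
        _ = c ^ (m * l) := by rw [ham, ← conj_zpow, hbl, mul_comm m, zpow_mul]
    have e3 : (a * b) * c = (b * a) * c * (b * a)⁻¹ * (a * b) := by
      rw [e2, ← e1]; group
    rw [hu, mul_assoc, e3]; group
  have huZ : ∀ z ∈ Z, u z = swap z1 z2 (swap z1 z3 (swap z1 z2 (swap z1 z3 z))) := by
    intro z hz
    have q1 := hswap z1 z3 h1 h3 z hz
    have q2 := hswap z1 z2 h1 h2 _ q1
    have q3 := hswap z1 z3 h1 h3 _ q2
    rw [hu, mul_inv_rev, Perm.mul_apply, Perm.mul_apply, Perm.mul_apply, hbZ z hz, haZ _ q1,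
      hbZ' _ q2, haZ' _ q3]
  have hu1 : u z1 = z2 := by
    rw [huZ z1 h1, swap_apply_left, swap_apply_of_ne_of_ne h13.symm h23.symm, swap_apply_right,
      swap_apply_left]
  have hu2 : u z2 = z3 := by
    rw [huZ z2 h2, swap_apply_of_ne_of_ne h12.symm h23, swap_apply_right, swap_apply_left,
      swap_apply_of_ne_of_ne h13.symm h23.symm]
  have hu3 : u z3 = z1 := by
    rw [huZ z3 h3, swap_apply_right, swap_apply_left, swap_apply_of_ne_of_ne h12.symm h23,
      swap_apply_right]
  have huf : ∀ z ∈ Z, z ≠ z1 → z ≠ z2 → z ≠ z3 → u z = z := by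
    intro z hz n1 n2 n3
    rw [huZ z hz, swap_apply_of_ne_of_ne n1 n3, swap_apply_of_ne_of_ne n1 n2,
      swap_apply_of_ne_of_ne n1 n3, swap_apply_of_ne_of_ne n1 n2]
  -- `u` agrees with a power of `c` on the support of `c`
  obtain ⟨w0, hw0, hcw⟩ := hcyc
  have hcommk : ∀ k : ℤ, ∀ w, u ((c ^ k) w) = (c ^ k) (u w) := by
    intro k w
    have : Commute u c := hcomm
    rw [← Perm.mul_apply, (this.zpow_right k).eq, Perm.mul_apply]
  have huw0 : c (u w0) ≠ u w0 := by
    rw [← Perm.mul_apply, ← hcomm, Perm.mul_apply]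
    exact fun h => hw0 (u.injective h)
  obtain ⟨j, hj⟩ := hcw huw0
  have hus : ∀ w ∈ c.support, u w = (c ^ j) w := by
    intro w hw
    obtain ⟨i, rfl⟩ := hcw (Perm.mem_support.1 hw)
    rw [hcommk, ← hj, ← Perm.mul_apply, ← Perm.mul_apply, ← zpow_add, ← zpow_add, add_comm]
  have hcs : ∀ w ∈ c.support, (c ^ j) w ∈ c.support := fun w hw =>
    Perm.zpow_apply_mem_support.2 hw
  apply absurd (hle (univ \ {z1, z2, z3}) ⟨u ^ p, G.pow_mem huG p, ?_, ?_⟩)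
  · rw [card_sdiff_of_subset (subset_univ _), card_univ, card_insert_of_notMem (by simp [h12, h13]),
      card_insert_of_notMem (by simp [h23]), card_singleton]
    omega
  · intro h
    have h' : (u ^ p) z1 = z1 := by rw [h, Perm.one_apply]
    have hu3' : (u ^ 3) z1 = z1 := by
      rw [pow_succ, pow_succ, pow_one, Perm.mul_apply, Perm.mul_apply, hu1, hu2, hu3]
    have hmod : p % 3 ≠ 0 := by
      intro h0
      have := (Nat.prime_dvd_prime_iff_eq Nat.prime_three hp).1 (Nat.dvd_of_mod_eq_zero h0)
      omega
    have hdiv := Nat.mod_add_div p 3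
    have hlt := Nat.mod_lt p (show 3 > 0 by norm_num)
    rw [← hdiv, pow_add, Perm.mul_apply, pow_apply_of_dvd (dvd_mul_right 3 (p / 3)) hu3'] at h'
    rcases (by omega : p % 3 = 1 ∨ p % 3 = 2) with h0 | h0
    · rw [h0, pow_one, hu1] at h'
      exact h12 h'.symm
    · rw [h0, pow_two, Perm.mul_apply, hu1, hu2] at h'
      exact h13 h'.symm
  · intro w hw
    by_cases hwZ : w ∈ Z
    · simp only [mem_sdiff, mem_univ, true_and, mem_insert, mem_singleton, not_or] at hw
      exact Perm.pow_apply_eq_self_of_apply_eq_self (huf w hwZ hw.1 hw.2.1 hw.2.2) p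
    · rw [hZdef, mem_compl, not_not] at hwZ
      rw [(Setup.pow_eqOn hcs hus p w hwZ).1, ← zpow_natCast, ← zpow_mul, mul_comm, zpow_mul,
        zpow_natCast, ← hc, pow_orderOf_eq_one, one_zpow, Perm.one_apply]

end PrimeCycle

/-! ### Small degree -/

namespace Setup

open Equiv

variable {α : Type*} [Fintype α] [DecidableEq α] {G : Subgroup (Perm α)} {f : ℕ}

theorem dvd_card_of_sTrans {C : Finset α} {p : ℕ} (hC : #C + p = Fintype.card α) (hp : 0 < p)
    (ht : STrans G C) : p ∣ Nat.card G := by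
  classical
  obtain ⟨x, hx⟩ := exists_notMem_of_card_lt (A := C) (by omega)
  have h := card_orbit_mul G C x
  have hO : univ.filter (fun y => SOrb G C x y) = Cᶜ := by
    ext y
    simp only [mem_filter, mem_univ, true_and, mem_compl]
    exact ⟨fun h => h.notMem hx, fun h => ht x y hx h⟩
  rw [hO, card_compl, show Fintype.card α - #C = p by omega] at h
  exact (Dvd.intro _ h).trans (card_ptStab_dvd G C)

theorem nt_of_sOrb {B : Finset α} {x y : α} (h : SOrb G B x y) (hN : Nt G (insert x B)) :
    Nt G (insert y B) := by
  obtain ⟨g, hg, hgB, rfl⟩ := h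
  have := hN.image hg
  rwa [image_insert, image_eq_of_fix hgB] at this

/-- Some `(f-1)`-set extends in two ways to an `f`-set with nontrivial pointwise stabilizer. -/
theorem exists_two (S : Setup G f) : ∃ (B : Finset α) (x y : α), #B + 1 = f ∧ x ∉ B ∧ y ∉ B ∧
    x ≠ y ∧ Nt G (insert x B) ∧ Nt G (insert y B) := by
  have h7 := S.seven
  have h2 := S.two_mul
  obtain ⟨A, -, hA⟩ := exists_subset_card_eq (s := (univ : Finset α)) (n := f - 2)
    (by rw [card_univ]; omega)
  obtain ⟨x0, hx0⟩ := exists_notMem_of_card_lt (A := A) (by omega)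
  have hc1 := card_insert_of_notMem hx0
  obtain ⟨y0, hy0⟩ := exists_notMem_of_card_lt (A := insert x0 A) (by omega)
  rw [mem_insert, not_or] at hy0
  obtain ⟨x, y, -, hy, hx, hxy, hN⟩ := S.cut (A := A) (by omega) (fun z => z = x0) hx0 hy0.2 rfl hy0.1
  subst hx
  have hc2 := card_insert_le y (insert x A)
  obtain ⟨z0, hz0⟩ := exists_notMem_of_card_lt (A := insert y (insert x A)) (by omega)
  rw [mem_insert, mem_insert, not_or, not_or] at hz0
  obtain ⟨u, v, hu, hv, huxy, hvxy, hN'⟩ := S.cut (A := A) (by omega) (fun z => z = x ∨ z = y) hx0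
    hz0.2.2 (Or.inl rfl) (by simp only [not_or]; exact ⟨hz0.2.1, hz0.1⟩)
  rw [not_or] at hvxy
  rcases huxy with rfl | rfl
  · refine ⟨insert u A, y, v, by omega, ?_, ?_, Ne.symm hvxy.2, hN, hN'⟩
    · rw [mem_insert, not_or]; exact ⟨hxy, hy⟩
    · rw [mem_insert, not_or]; exact ⟨hvxy.1, hv⟩
  · have hc3 := card_insert_of_notMem hy
    refine ⟨insert u A, x, v, by omega, ?_, ?_, Ne.symm hvxy.1, ?_, hN'⟩
    · rw [mem_insert, not_or]; exact ⟨fun h => hxy h.symm, hx0⟩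
    · rw [mem_insert, not_or]; exact ⟨hvxy.2, hv⟩
    · rwa [insert_comm]

/-- If `p = n - f + 1` is prime, then it divides `|G|`: the stabilizer of a suitable `(f-1)`-set has
one nonregular orbit, of size at least two, whose size divides those of all other orbits. -/
theorem dvd_card_of_top (S : Setup G f) {p : ℕ} (hp : p.Prime) (hpf : p + f = Fintype.card α + 1) :
    p ∣ Nat.card G := by
  classical
  obtain ⟨B, x, y, hB, hx, hy, hxy, hNx, hNy⟩ := S.exists_two
  obtain ⟨Φ, hΦ⟩ : ∃ Φ : Finset α, Φ = univ.filter (fun z => z ∉ B ∧ Nt G (insert z B)) := ⟨_, rfl⟩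
  have hmem : ∀ z, z ∈ Φ ↔ z ∉ B ∧ Nt G (insert z B) := fun z => by rw [hΦ]; simp
  have horb : ∀ z ∈ Φ, ∀ w, w ∈ Φ ↔ SOrb G B z w := by
    intro z hz w
    rw [hmem] at hz
    rw [hmem]
    exact ⟨fun hw => S.orb_of_nt hB hz.1 hw.1 hz.2 hw.2,
      fun h => ⟨h.notMem hz.1, nt_of_sOrb h hz.2⟩⟩
  have hxΦ : x ∈ Φ := (hmem x).2 ⟨hx, hNx⟩
  have hyΦ : y ∈ Φ := (hmem y).2 ⟨hy, hNy⟩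
  have hΦK : #Φ ∣ Nat.card (ptStab G B) := by
    have h := card_orbit_mul G B x
    have hO : univ.filter (fun y => SOrb G B x y) = Φ := by
      ext w; rw [horb x hxΦ w]; simp
    rw [hO] at h
    exact Dvd.intro _ h
  have hdvd : #Φ ∣ #Bᶜ := by
    apply dvd_card_of_orbits G B
    · intro w hw v hv
      rw [mem_compl] at hw ⊢
      exact hv.notMem hw
    · intro w hw O hO
      rw [mem_compl] at hw
      by_cases hwΦ : w ∈ Φ
      · have : O = Φ := by ext v; rw [hO, horb w hwΦ]
        rw [this]
      · have h := card_orbit_mul G B w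
        have hOe : univ.filter (fun y => SOrb G B w y) = O := by
          ext v; rw [hO]; simp
        rw [hOe, card_ptStab_eq_one fun hN => hwΦ ((hmem w).2 ⟨hw, hN⟩), mul_one] at h
        rwa [h]
  have h2 : 1 < #Φ := one_lt_card.2 ⟨x, hxΦ, y, hyΦ, hxy⟩
  rw [card_compl, show Fintype.card α - #B = p by omega] at hdvd
  rcases (Nat.dvd_prime hp).1 hdvd with h | h
  · omega
  · rw [← h]
    exact hΦK.trans (card_ptStab_dvd G B)

/-- If the stabilizer of the `(f-1)`-set `B` has more than `n - f` elements, it has no regular orbit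
on the remaining points, and so is transitive on them. -/
theorem sTrans_of_card_lt (S : Setup G f) {B : Finset α} (hB : #B + 1 = f)
    (hK : Fintype.card α < Nat.card (ptStab G B) + f) : STrans G B := by
  classical
  have hall : ∀ x, x ∉ B → Nt G (insert x B) := by
    intro x hx
    by_contra hN
    obtain ⟨y, hy, hNy⟩ := S.exists_nt hB
    have h := card_orbit_mul G B x
    rw [card_ptStab_eq_one hN, mul_one] at h
    have hsub : univ.filter (fun z => SOrb G B x z) ⊆ (insert y B)ᶜ := by
      intro z hz
      have hz' : SOrb G B x z := by simpa using hz
      rw [mem_compl, mem_insert, not_or]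
      refine ⟨?_, hz'.notMem hx⟩
      rintro rfl
      exact hN (nt_of_sOrb hz'.symm hNy)
    have := card_le_card hsub
    have h2 := S.two_mul
    rw [card_compl, card_insert_of_notMem hy] at this
    omega
  exact fun x y hx hy => S.orb_of_nt hB hx hy (hall x hx) (hall y hy)

/-- If `p = n - f` is prime, then it divides `|G|`: a nontrivial stabilizer of `f` points acts
freely on the remaining points. -/
theorem dvd_card_of_free (S : Setup G f) {p : ℕ} (hp : p.Prime) (hpf : p + f = Fintype.card α) :
    p ∣ Nat.card G := by
  classical
  obtain ⟨A, hA, hN⟩ := S.ex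
  have hdvd : Nat.card (ptStab G A) ∣ #Aᶜ := by
    apply dvd_card_of_orbits G A
    · intro w hw v hv
      rw [mem_compl] at hw ⊢
      exact hv.notMem hw
    · intro w hw O hO
      rw [mem_compl] at hw
      have h := card_orbit_mul G A w
      have hOe : univ.filter (fun y => SOrb G A w y) = O := by
        ext v; rw [hO]; simp
      rw [hOe, card_ptStab_eq_one fun hN => ?_, mul_one] at h
      · rw [h]
      · have := S.le _ hN
        rw [card_insert_of_notMem hw] at this
        omega
  rw [card_compl, show Fintype.card α - #A = p by omega] at hdvd
  rcases (Nat.dvd_prime hp).1 hdvd with h | h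
  · have := one_lt_card_ptStab hN
    omega
  · rw [← h]
    exact card_ptStab_dvd G A

/-- No prime `p` satisfies `n / 2 < p ≤ n - 3` and `n - p ≤ f - 1`: it would divide `|G|`, and `G` is
`(n - p)`-transitive. -/
theorem false_of_prime (S : Setup G f) {p : ℕ} (hp : p.Prime) (hn : Fintype.card α < 2 * p)
    (hp3 : p + 3 ≤ Fintype.card α) (hpf : Fintype.card α + 1 ≤ p + f) : False := by
  have h7 := S.seven
  have h2 := S.two_mul
  refine _root_.false_of_prime (G := G) hp hn hp3 (by omega) ?_
    (fun Z hZ σ => S.exists_eqOn' Z (by omega) σ) (fun A hA => by have := S.le A hA; omega)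
  by_cases h : Fintype.card α + 1 = p + f
  · exact S.dvd_card_of_top hp h.symm
  · obtain ⟨C, -, hC⟩ := exists_subset_card_eq (s := (univ : Finset α)) (n := Fintype.card α - p)
      (by rw [card_univ]; omega)
    exact dvd_card_of_sTrans (C := C) (by omega) hp.pos (S.sTrans C (by omega))

end Setup

section SmallDegree

open Equiv

variable {α : Type*} [Fintype α] [DecidableEq α] {G : Subgroup (Perm α)} {f : ℕ}

theorem descFactorial_mono_right {n a b : ℕ} (hab : a ≤ b) (hb : b ≤ n) :
    n.descFactorial a ≤ n.descFactorial b := by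
  induction b, hab using Nat.le_induction with
  | base => exact le_rfl
  | succ b hab ih =>
    rw [Nat.descFactorial_succ]
    exact (ih (by omega)).trans (Nat.le_mul_of_pos_left _ (by omega))

/-- The inequality `n (n - 1) ⋯ (n - k + 1) (⌊n / 2⌋ + 1) < n.choose ⌊n / 2⌋`, with denominators
cleared. -/
def BigChoose (n k : ℕ) : Prop :=
  n.descFactorial k * (n / 2 + 1) * ((n / 2).factorial * (n - n / 2).factorial) < n.factorial

instance (n k : ℕ) : Decidable (BigChoose n k) := by unfold BigChoose; infer_instance

theorem BigChoose.lt {n k : ℕ} (h : BigChoose n k) :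
    n.descFactorial k * (n / 2 + 1) < n.choose (n / 2) := by
  unfold BigChoose at h
  rw [← Nat.choose_mul_factorial_mul_factorial (show n / 2 ≤ n by omega), mul_assoc (n.choose _)] at h
  exact Nat.lt_of_mul_lt_mul_right h

/-- If `n (n - 1) ⋯ (n - k + 1)` is too small for the order of `G`, then `k ≤ f`. -/
theorem BigChoose.le (hU : HasUTP G) (hle : ∀ A, Nt G A → #A ≤ f) {k : ℕ}
    (hk : k ≤ Fintype.card α) (h : BigChoose (Fintype.card α) k) : k ≤ f := by
  by_contra hlt
  have h1 := hU.choose_le_descFactorial hle (by omega)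
  have h2 := h.lt
  have h3 := Nat.mul_le_mul_right (Fintype.card α / 2 + 1)
    (descFactorial_mono_right (n := Fintype.card α) (show f + 1 ≤ k by omega) hk)
  omega

theorem bigChoose_seven : ∀ n < 256, 47 ≤ n → BigChoose n 7 := by decide +kernel

/-- The primes used for degrees below 256. -/
def smallPrimes : List ℕ :=
  [43, 47, 53, 59, 61, 67, 71, 73, 79, 83, 89, 97, 101, 103, 107, 109, 113, 127, 131, 137, 139, 149,
    151, 157, 163, 167, 173, 179, 181, 191, 193, 197, 199, 211, 223, 227, 229, 233, 239, 241, 251]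

theorem prime_of_mem_smallPrimes : ∀ p ∈ smallPrimes, p.Prime := by
  simp only [smallPrimes, List.forall_mem_cons, List.not_mem_nil, false_imp_iff, implies_true]
  norm_num

theorem exists_smallPrime : ∀ n < 256, 47 ≤ n → n ≠ 55 →
    ∃ p ∈ smallPrimes, n < 2 * p ∧ p + 3 ≤ n ∧ BigChoose n (n + 1 - p) := by decide +kernel

/-- For `47 ≤ n < 256`, the order bounds force `f ≥ n - p + 1` for a suitable prime `p`, except for
`n = 55`. In that degree `p = 47`, and if `f = n - p = 8` the order of `G` forces
`8`-transitivity. -/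
theorem Setup.false_of_small (S : Setup G f) (hn : 47 ≤ Fintype.card α)
    (hn' : Fintype.card α < 256) : False := by
  have h2 := S.two_mul
  by_cases h55 : Fintype.card α = 55
  · have hp : Nat.Prime 47 := by norm_num
    have h8 : 8 ≤ f := BigChoose.le S.utp S.le (by omega) (by rw [h55]; decide +kernel)
    by_cases h9 : 9 ≤ f
    · exact S.false_of_prime hp (by omega) (by omega) (by omega)
    have hf : f = 8 := by omega
    subst hf
    have htop : ∀ B : Finset α, #B + 1 = 8 → STrans G B := by
      intro B hB
      apply S.sTrans_of_card_lt hB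
      have h3 := S.utp.choose_le (Fintype.card α / 2) (by omega)
      have h4 := card_le_descFactorial G B
      rw [show #B = 7 by omega] at h4
      by_contra hlt
      have h5 : Nat.card (ptStab G B) ≤ 47 := by omega
      have h6 : Nat.descFactorial 55 7 * 47 * 28 * (Nat.factorial 27 * Nat.factorial 28) <
          Nat.factorial 55 := by decide +kernel
      rw [← Nat.choose_mul_factorial_mul_factorial (show 27 ≤ 55 by omega),
        mul_assoc (Nat.choose 55 27)] at h6
      have h7 : Nat.descFactorial 55 7 * 47 * 28 < Nat.choose 55 27 :=
        Nat.lt_of_mul_lt_mul_right h6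
      rw [h55] at h3 h4
      have h8 := Nat.mul_le_mul_right 28 (h4.trans (Nat.mul_le_mul_left _ h5))
      exact absurd (h3.trans h8) (not_le.2 h7)
    have htr : ∀ C : Finset α, #C < 8 → STrans G C := by
      intro C hC
      by_cases h : #C + 2 ≤ 8
      · exact S.sTrans C h
      · exact htop C (by omega)
    exact _root_.false_of_prime (G := G) hp (by omega) (by omega) (by omega)
      (S.dvd_card_of_free hp (by omega)) (fun Z hZ σ => exists_eqOn htr Z (by omega) σ)
      (fun A hA => by have := S.le A hA; omega)
  · obtain ⟨p, hpm, hp1, hp2, hB⟩ := exists_smallPrime _ hn' hn h55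
    have := BigChoose.le S.utp S.le (by omega) hB
    exact S.false_of_prime (prime_of_mem_smallPrimes p hpm) hp1 hp2 (by omega)

end SmallDegree

/-! ### The theorem -/

theorem stmt15 (n : ℕ) (hn : 47 ≤ n) (G : Subgroup (Equiv.Perm (Fin n)))
    (htrans : ∀ x y : Fin n, ∃ g ∈ G, g x = y)
    (hprim : ∀ P : Finpartition (Finset.univ : Finset (Fin n)),
      (∀ g ∈ G, ∀ p ∈ P.parts, p.image ⇑g ∈ P.parts) →
      P.parts.card = 1 ∨ ∀ p ∈ P.parts, p.card = 1)
    (hA : ¬ alternatingGroup (Fin n) ≤ G) :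
    ¬ HasUTP G := by
  classical
  intro hU
  have hpre := isPreprimitive_of_partitions G htrans hprim
  have hcardn : Fintype.card (Fin n) = n := Fintype.card_fin n
  obtain ⟨g0, hg0, hg01⟩ := htrans ⟨0, by omega⟩ ⟨1, by omega⟩
  have hne : (Finset.univ.filter (fun g : Equiv.Perm (Fin n) => g ∈ G ∧ g ≠ 1)).Nonempty := by
    refine ⟨g0, Finset.mem_filter.2 ⟨Finset.mem_univ _, hg0, ?_⟩⟩
    rintro rfl
    simp at hg01
  -- a nonidentity element `g` of `G` with as many fixed points as possible
  obtain ⟨g, hg, hmax⟩ := Finset.exists_max_image _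
    (fun g : Equiv.Perm (Fin n) => (Finset.univ.filter (fun x => g x = x)).card) hne
  rw [Finset.mem_filter] at hg
  obtain ⟨f, hf⟩ : ∃ f, f = (Finset.univ.filter (fun x => g x = x)).card := ⟨_, rfl⟩
  have hle : ∀ A, Nt G A → A.card ≤ f := by
    rintro A ⟨k, hk, hk1, hkA⟩
    rw [hf]
    refine le_trans (Finset.card_le_card fun a ha => ?_)
      (hmax k (Finset.mem_filter.2 ⟨Finset.mem_univ _, hk, hk1⟩))
    simpa using hkA a ha
  have htwo : 2 * f + 2 ≤ Fintype.card (Fin n) := by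
    have h1 := lt_card_support_of_mem hpre hA hU hg.2.1 hg.2.2
    have h2 : f + g.support.card = Fintype.card (Fin n) := by
      rw [hf, ← Finset.card_univ,
        ← Finset.card_filter_add_card_filter_not (s := Finset.univ) (fun x => g x = x)]
      congr 2
    omega
  have hS : 7 ≤ f → Setup G f := fun h7 =>
    ⟨hU, htrans, hle, ⟨_, hf.symm, g, hg.2.1, hg.2.2, fun a ha => by simpa using ha⟩, htwo, h7⟩
  by_cases hn' : n < 256
  · have h7 : 7 ≤ f := BigChoose.le hU hle (by omega)
      (by rw [hcardn]; exact bigChoose_seven n hn' hn)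
    exact (hS h7).false_of_small (by omega) (by omega)
  · exact (hS (hU.seven_le hle (by omega) (by omega))).false_of_large (by omega)
end

section
/- For every n ≥ 1, the alternating group A_n and the symmetric group S_n have the universal transversal property. -/
/-!
Choosing a bijection from `I` to the classes of `P` and a point in each class gives an injection
of `I` into the ground set whose range is a transversal; it extends to a permutation `g`, which
settles the symmetric group. If `g` is odd and `I` has two distinct elements, precomposing `g` with
their transposition makes it even without changing the image of `I`. If `|I| ≤ 1`, then `P` has at
most one class and `I` itself is already a transversal.
-/


open Finset

/-- The symmetric group has the universal transversal property, on any finite set. -/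
theorem exists_perm_isTransversal {α : Type*} [DecidableEq α] [Fintype α] (I : Finset α)
    (P : Finpartition (Finset.univ : Finset α)) (h : P.parts.card = I.card) :
    ∃ g : Equiv.Perm α, IsTransversal (I.image ⇑g) P := by
  have e : {x // x ∈ I} ≃ {p // p ∈ P.parts} := Finset.equivOfCardEq h.symm
  choose f hf using fun p : {p // p ∈ P.parts} => P.nonempty_of_mem_parts p.2
  have hinj : Function.Injective (fun i => f (e i)) := by
    intro i j hij
    have hj := hf (e j)
    rw [← show f (e i) = f (e j) from hij] at hj
    exact e.injective (Subtype.ext (P.eq_of_mem_parts (e i).2 (e j).2 (hf (e i)) hj))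
  let g : Equiv.Perm α := (Equiv.ofInjective _ hinj).extendSubtype
  have hg : ∀ i : {x // x ∈ I}, g i = f (e i) := fun i =>
    Equiv.extendSubtype_apply_of_mem (Equiv.ofInjective _ hinj) i.1 i.2
  refine ⟨g, fun p hp => Finset.card_eq_one.2 ⟨f ⟨p, hp⟩, ?_⟩⟩
  ext x
  simp only [Finset.mem_inter, Finset.mem_image, Finset.mem_singleton]
  constructor
  · rintro ⟨⟨i, hi, rfl⟩, hx⟩
    rw [hg ⟨i, hi⟩] at hx ⊢
    congr 1
    exact Subtype.ext (P.eq_of_mem_parts (e ⟨i, hi⟩).2 hp (hf _) hx)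
  · rintro rfl
    refine ⟨⟨e.symm ⟨p, hp⟩, (e.symm ⟨p, hp⟩).2, ?_⟩, hf ⟨p, hp⟩⟩
    rw [hg, Equiv.apply_symm_apply]

theorem isTransversal_of_card_le_one {α : Type*} [DecidableEq α] [Fintype α] (I : Finset α)
    (P : Finpartition (Finset.univ : Finset α)) (h : P.parts.card = I.card) (hI : I.card ≤ 1) :
    IsTransversal I P := by
  intro p hp
  have hpos : 0 < P.parts.card := Finset.card_pos.2 ⟨p, hp⟩
  have hsub : I ⊆ p := by
    intro x _
    obtain ⟨q, hq, hxq⟩ := P.exists_mem (Finset.mem_univ x)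
    rwa [Finset.card_le_one.1 (h.trans_le hI) p hp q hq]
  rw [Finset.inter_eq_left.2 hsub]
  omega

theorem image_mul_swap {α : Type*} [DecidableEq α] {I : Finset α} {a b : α} (ha : a ∈ I)
    (hb : b ∈ I) (g : Equiv.Perm α) : I.image ⇑(g * Equiv.swap a b) = I.image ⇑g := by
  have hswap : I.image ⇑(Equiv.swap a b) = I := by
    refine Finset.eq_of_subset_of_card_le ?_
      (Finset.card_image_of_injective _ (Equiv.injective _)).ge
    intro x hx
    obtain ⟨y, hy, rfl⟩ := Finset.mem_image.1 hx
    rw [Equiv.swap_apply_def]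
    split_ifs <;> assumption
  rw [Equiv.Perm.coe_mul, ← Finset.image_image, hswap]

theorem stmt17 (n : ℕ) (hn : 1 ≤ n) :
    HasUTP (alternatingGroup (Fin n)) ∧
    HasUTP (⊤ : Subgroup (Equiv.Perm (Fin n))) := by
  refine ⟨fun I P h => ?_, fun I P h => ?_⟩
  · by_cases hI : I.card ≤ 1
    · refine ⟨1, one_mem _, ?_⟩
      simpa using isTransversal_of_card_le_one I P h hI
    · obtain ⟨a, ha, b, hb, hab⟩ := Finset.one_lt_card.1 (not_le.1 hI)
      obtain ⟨g, hg⟩ := exists_perm_isTransversal I P h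
      rcases Int.units_eq_one_or (Equiv.Perm.sign g) with hs | hs
      · exact ⟨g, Equiv.Perm.mem_alternatingGroup.2 hs, hg⟩
      · refine ⟨g * Equiv.swap a b, ?_, ?_⟩
        · rw [Equiv.Perm.mem_alternatingGroup, map_mul, hs, Equiv.Perm.sign_swap hab]
          rfl
        · rwa [image_mul_swap ha hb]
  · obtain ⟨g, hg⟩ := exists_perm_isTransversal I P h
    exact ⟨g, Subgroup.mem_top g, hg⟩
end

section
/- Let p ≥ 5 be a prime, let k ≥ 2, and let V be the k-dimensional vector space over the field F_p with p elements. Let G be a group of permutations of V every element of which is an affine transformation of V (i.e. of the form v ↦ vA + b with A an invertible linear map and b ∈ V). Then G does not have the universal transversal property with respect to its action on the set V: there exist a subset I of V and a partition P of V with exactly |I| classes such that for no g ∈ G is Ig a transversal for P. -/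
/-!
Affine maps preserve midpoints. Write `e` and `f` for the first two standard basis vectors of
`V = F_p^k`. Let `I = {0, e, f, e + f}`, and let `P` consist of the three singletons `{0}`, `{e}`,
`{-e}` together with the complement of their union. If `Ig` is a transversal for `P`, then it
contains `0`, `e` and `-e`, and `0` is the midpoint of `e` and `-e`; pulling back along the affine
bijection `g` gives `a, b, c ∈ I` with `b ≠ c` and `b + c = a + a`. But all coordinates of points
of `I` are `0` or `1`, and in odd characteristic such an equation forces `b = c`.
-/

open Finset

/-- In odd characteristic, a point of `{0, 1}` is the midpoint of two points of `{0, 1}` only if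
these coincide. -/
lemma eq_of_add_eq_double {F : Type*} [Field F] (h2 : (2 : F) ≠ 0) {a b c : F}
    (ha : a = 0 ∨ a = 1) (hb : b = 0 ∨ b = 1) (hc : c = 0 ∨ c = 1)
    (h : b + c = a + a) : b = c := by
  rcases ha with rfl | rfl <;> rcases hb with rfl | rfl <;> rcases hc with rfl | rfl <;>
    first
    | rfl
    | (exfalso; apply h2; linear_combination 2 * h)
    | (exfalso; apply h2; linear_combination -2 * h)

/-- A transversal contains every point that forms a class by itself. -/
lemma mem_of_isTransversal {α : Type*} [DecidableEq α] [Fintype α] {T : Finset α}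
    {P : Finpartition (Finset.univ : Finset α)} (h : IsTransversal T P) {x : α}
    (hx : {x} ∈ P.parts) : x ∈ T := by
  have h1 := h _ hx
  by_contra hxT
  rw [Finset.inter_singleton_of_notMem hxT] at h1
  simp at h1

/-- The partition is the one into the singletons of points of `S` and the complement of `S`. -/
lemma exists_partition_singletons {α : Type*} [DecidableEq α] [Fintype α] (S : Finset α)
    (hS : Sᶜ.Nonempty) : ∃ P : Finpartition (Finset.univ : Finset α),
      P.parts.card = S.card + 1 ∧ ∀ x ∈ S, {x} ∈ P.parts := by
  refine ⟨(⊥ : Finpartition S).extend hS.ne_empty disjoint_compl_right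
    (Finset.union_compl S), ?_, ?_⟩
  · rw [Finpartition.card_extend, Finpartition.card_bot]
  · intro x hx
    simp [Finpartition.extend, hx]

theorem stmt18 (p k : ℕ) [Fact p.Prime] (hp : 5 ≤ p) (hk : 2 ≤ k)
    (G : Subgroup (Equiv.Perm (Fin k → ZMod p)))
    (hG : ∀ g ∈ G, ∃ (A : (Fin k → ZMod p) ≃ₗ[ZMod p] (Fin k → ZMod p))
      (b : Fin k → ZMod p), ∀ v, g v = A v + b) :
    ∃ (I : Finset (Fin k → ZMod p))
      (P : Finpartition (Finset.univ : Finset (Fin k → ZMod p))),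
      P.parts.card = I.card ∧ ∀ g ∈ G, ¬ IsTransversal (I.image ⇑g) P := by
  have h2 : (2 : ZMod p) ≠ 0 := by
    intro h
    have h' : ((2 : ℕ) : ZMod p) = 0 := by exact_mod_cast h
    rw [ZMod.natCast_eq_zero_iff] at h'
    have := Nat.le_of_dvd (by norm_num) h'
    omega
  let i0 : Fin k := ⟨0, by omega⟩
  let i1 : Fin k := ⟨1, by omega⟩
  have h01 : i0 ≠ i1 := by simp [i0, i1]
  obtain ⟨e, he⟩ : ∃ e : Fin k → ZMod p, e = Pi.single i0 1 := ⟨_, rfl⟩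
  obtain ⟨f, hf⟩ : ∃ f : Fin k → ZMod p, f = Pi.single i1 1 := ⟨_, rfl⟩
  have e0 : e i0 = 1 := by simp [he]
  have e1 : e i1 = 0 := by simp [he, h01.symm]
  have f0 : f i0 = 0 := by simp [hf, h01]
  have f1 : f i1 = 1 := by simp [hf]
  -- Points with different values at `i0` or `i1` are distinct.
  have ne0 {u v : Fin k → ZMod p} (h : u i0 ≠ v i0) : u ≠ v := fun h' => h (by rw [h'])
  have ne1 {u v : Fin k → ZMod p} (h : u i1 ≠ v i1) : u ≠ v := fun h' => h (by rw [h'])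
  have hne : e ≠ -e := by
    refine ne0 fun h => h2 ?_
    simp only [Pi.neg_apply, e0] at h
    linear_combination h
  have hScard : ({0, e, -e} : Finset (Fin k → ZMod p)).card = 3 :=
    Finset.card_eq_three.mpr ⟨0, e, -e, ne0 (by simp [e0]), ne0 (by simp [e0]), hne, rfl⟩
  have hIcard : ({0, e, f, e + f} : Finset (Fin k → ZMod p)).card = 4 := by
    rw [Finset.card_insert_of_notMem, Finset.card_eq_three.mpr
      ⟨e, f, e + f, ne0 (by simp [e0, f0]), ne1 (by simp [f1, e1]), ne0 (by simp [e0, f0]), rfl⟩]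
    simp only [Finset.mem_insert, Finset.mem_singleton, not_or]
    exact ⟨ne0 (by simp [e0]), ne1 (by simp [f1]), ne0 (by simp [e0, f0])⟩
  have hI01 : ∀ v ∈ ({0, e, f, e + f} : Finset (Fin k → ZMod p)), ∀ j, v j = 0 ∨ v j = 1 := by
    intro v hv j
    simp only [Finset.mem_insert, Finset.mem_singleton] at hv
    by_cases hj0 : j = i0
    · subst hj0
      rcases hv with rfl | rfl | rfl | rfl <;> simp [e0, f0]
    by_cases hj1 : j = i1
    · subst hj1
      rcases hv with rfl | rfl | rfl | rfl <;> simp [e1, f1]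
    have ej : e j = 0 := by simp [he, hj0]
    have fj : f j = 0 := by simp [hf, hj1]
    rcases hv with rfl | rfl | rfl | rfl <;> simp [ej, fj]
  obtain ⟨P, hPcard, hP⟩ := exists_partition_singletons ({0, e, -e} : Finset (Fin k → ZMod p))
    ⟨f, by
      simp only [Finset.mem_compl, Finset.mem_insert, Finset.mem_singleton, not_or]
      exact ⟨ne1 (by simp [f1]), ne1 (by simp [f1, e1]), ne1 (by simp [f1, e1])⟩⟩
  refine ⟨{0, e, f, e + f}, P, by rw [hPcard, hScard, hIcard], ?_⟩
  intro g hg hT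
  obtain ⟨A, w, hA⟩ := hG g hg
  obtain ⟨a, ha, hga⟩ := Finset.mem_image.mp (mem_of_isTransversal hT (hP 0 (by simp)))
  obtain ⟨b, hb, hgb⟩ := Finset.mem_image.mp (mem_of_isTransversal hT (hP e (by simp)))
  obtain ⟨c, hc, hgc⟩ := Finset.mem_image.mp (mem_of_isTransversal hT (hP (-e) (by simp)))
  have hmid : b + c = a + a := by
    apply A.injective
    rw [hA] at hga hgb hgc
    rw [map_add, map_add, eq_neg_of_add_eq_zero_left hga, eq_sub_of_add_eq hgb,
      eq_sub_of_add_eq hgc]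
    abel
  have hbc : b = c := funext fun j =>
    eq_of_add_eq_double h2 (hI01 a ha j) (hI01 b hb j) (hI01 c hc j) (congrFun hmid j)
  exact hne (hgb.symm.trans ((congrArg g hbc).trans hgc))
end

section
/- Let n ≥ 1, let G be a subgroup of S_n, let a ∈ T_n∖S_n be a singular transformation, and let E be the set of idempotents of ⟨G,a⟩∖G whose rank equals rank(a). Then ⟨G,a⟩∖G is idempotent generated if and only if every element of GaG = {g a h : g, h ∈ G} is contained in the subsemigroup ⟨E⟩ generated by E. -/
/-!
Write `S = ⟨G,a⟩ ∖ G` and `K = ⟨GaG⟩`. A product of elements of `G ∪ {a}` that uses `a` at least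
once can be regrouped as a product of elements of `GaG`, and such a product has rank at most
`rank a < n`, so it is not a permutation; hence `S = K` (`genGAminusG_eq`). In particular `S` is a
subsemigroup, generated by `GaG`, all of whose elements have rank at most `rank a`.

If `GaG ⊆ ⟨E⟩`, then `S = K ⊆ ⟨E⟩ ⊆ S`, so `S` is generated by idempotents. Conversely, if `S` is
generated by its idempotents, write an element of `GaG`, which has rank exactly `rank a`, as a
product of idempotents of `S`. Since rank does not increase under multiplication, each factor has
rank at least `rank a`, hence exactly `rank a`, so each factor lies in `E`.
-/

open Finset

namespace Transf

variable {n : ℕ}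

theorem rank_mul_le_left (x y : Transf (Fin n)) : rank (x * y) ≤ rank x := by
  have h : Set.range (x * y).toFun = y.toFun '' Set.range x.toFun :=
    Set.range_comp y.toFun x.toFun
  unfold rank
  rw [h]
  exact Set.ncard_image_le (Set.toFinite _)

theorem rank_mul_le_right (x y : Transf (Fin n)) : rank (x * y) ≤ rank y :=
  Set.ncard_le_ncard (Set.range_comp_subset_range x.toFun y.toFun) (Set.toFinite _)

theorem ofPerm_mul (g h : Equiv.Perm (Fin n)) : ofPerm g * ofPerm h = ofPerm (h * g) := rfl

theorem ofPerm_one_mul (x : Transf (Fin n)) : ofPerm 1 * x = x := rfl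

theorem mul_ofPerm_one (x : Transf (Fin n)) : x * ofPerm 1 = x := rfl

theorem rank_sandwich (g h : Equiv.Perm (Fin n)) (a : Transf (Fin n)) :
    rank (ofPerm g * a * ofPerm h) = rank a := by
  apply le_antisymm
  · exact (rank_mul_le_left _ _).trans (rank_mul_le_right _ _)
  · have h1 : ofPerm g⁻¹ * (ofPerm g * a * ofPerm h) * ofPerm h⁻¹ = a := by
      have h2 : ofPerm g⁻¹ * (ofPerm g * a * ofPerm h) * ofPerm h⁻¹
          = (ofPerm g⁻¹ * ofPerm g) * a * (ofPerm h * ofPerm h⁻¹) := rfl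
      rw [h2, ofPerm_mul, ofPerm_mul, mul_inv_cancel, inv_mul_cancel, ofPerm_one_mul,
        mul_ofPerm_one]
    calc rank a = rank (ofPerm g⁻¹ * (ofPerm g * a * ofPerm h) * ofPerm h⁻¹) := by rw [h1]
      _ ≤ _ := (rank_mul_le_left _ _).trans (rank_mul_le_right _ _)

end Transf

open Transf

section

variable {n : ℕ}

/-- The double coset `GaG`. -/
def doubleCosetGA (G : Subgroup (Equiv.Perm (Fin n))) (a : Transf (Fin n)) :
    Set (Transf (Fin n)) :=
  {u | ∃ g ∈ G, ∃ h ∈ G, u = ofPerm g * a * ofPerm h}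

/-- The subsemigroup `⟨GaG⟩`. -/
def genDoubleCoset (G : Subgroup (Equiv.Perm (Fin n))) (a : Transf (Fin n)) :
    Subsemigroup (Transf (Fin n)) :=
  Subsemigroup.closure (doubleCosetGA G a)

variable {G : Subgroup (Equiv.Perm (Fin n))} {a : Transf (Fin n)}

theorem ofPerm_mul_mem_genDoubleCoset {g : Equiv.Perm (Fin n)} (hg : g ∈ G)
    {u : Transf (Fin n)} (hu : u ∈ genDoubleCoset G a) :
    ofPerm g * u ∈ genDoubleCoset G a := by
  unfold genDoubleCoset at hu ⊢
  induction hu using Subsemigroup.closure_induction with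
  | mem x hx =>
    obtain ⟨k, hk, h, hh, rfl⟩ := hx
    exact Subsemigroup.subset_closure ⟨k * g, G.mul_mem hk hg, h, hh, rfl⟩
  | mul x y _ hy ihx _ =>
    rw [← mul_assoc]
    exact Subsemigroup.mul_mem _ ihx hy

theorem mul_ofPerm_mem_genDoubleCoset {g : Equiv.Perm (Fin n)} (hg : g ∈ G)
    {u : Transf (Fin n)} (hu : u ∈ genDoubleCoset G a) :
    u * ofPerm g ∈ genDoubleCoset G a := by
  unfold genDoubleCoset at hu ⊢
  induction hu using Subsemigroup.closure_induction with
  | mem x hx =>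
    obtain ⟨k, hk, h, hh, rfl⟩ := hx
    exact Subsemigroup.subset_closure ⟨k, hk, g * h, G.mul_mem hg hh, rfl⟩
  | mul x y hx _ _ ihy =>
    rw [mul_assoc]
    exact Subsemigroup.mul_mem _ hx ihy

theorem rank_le_of_mem_genDoubleCoset {u : Transf (Fin n)} (hu : u ∈ genDoubleCoset G a) :
    rank u ≤ rank a := by
  unfold genDoubleCoset at hu
  induction hu using Subsemigroup.closure_induction with
  | mem x hx =>
    obtain ⟨k, _, h, _, rfl⟩ := hx
    exact (rank_sandwich k h a).le
  | mul x y _ _ ihx _ => exact (rank_mul_le_left x y).trans ihx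

theorem mem_or_mem_of_mem_genGA {u : Transf (Fin n)} (hu : u ∈ genGA G a) :
    u ∈ ofPerm '' (G : Set (Equiv.Perm (Fin n))) ∨ u ∈ genDoubleCoset G a := by
  unfold genGA at hu
  induction hu using Subsemigroup.closure_induction with
  | mem x hx =>
    rcases hx with rfl | hx
    · exact Or.inr (Subsemigroup.subset_closure ⟨1, G.one_mem, 1, G.one_mem, rfl⟩)
    · exact Or.inl hx
  | mul x y _ _ ihx ihy =>
    rcases ihx with ⟨g, hg, rfl⟩ | hx <;> rcases ihy with ⟨h, hh, rfl⟩ | hy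
    · exact Or.inl ⟨h * g, G.mul_mem hh hg, rfl⟩
    · exact Or.inr (ofPerm_mul_mem_genDoubleCoset hg hy)
    · exact Or.inr (mul_ofPerm_mem_genDoubleCoset hh hx)
    · exact Or.inr (Subsemigroup.mul_mem _ hx hy)

theorem genDoubleCoset_le_genGA : genDoubleCoset G a ≤ genGA G a := by
  refine Subsemigroup.closure_le.2 ?_
  rintro _ ⟨g, hg, h, hh, rfl⟩
  have hmem : ∀ k ∈ G, ofPerm k ∈ genGA G a := fun k hk =>
    Subsemigroup.subset_closure (Or.inr ⟨k, hk, rfl⟩)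
  exact Subsemigroup.mul_mem _ (Subsemigroup.mul_mem _ (hmem g hg)
    (Subsemigroup.subset_closure (Or.inl rfl))) (hmem h hh)

/-- A permutation has full rank, which exceeds the rank of the singular map `a`. -/
theorem ofPerm_notMem_genDoubleCoset (ha : ¬ Function.Bijective a.toFun)
    (g : Equiv.Perm (Fin n)) : ofPerm g ∉ genDoubleCoset G a := by
  intro hg
  have hle := rank_le_of_mem_genDoubleCoset hg
  have hfull : Set.range (ofPerm g).toFun = Set.univ := g.surjective.range_eq
  unfold rank at hle
  rw [hfull] at hle
  have hrange : Set.range a.toFun = Set.univ :=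
    Set.eq_of_subset_of_ncard_le (Set.subset_univ _) hle (Set.toFinite _)
  exact ha (Finite.surjective_iff_bijective.1 (Set.range_eq_univ.1 hrange))

theorem genGAminusG_eq (ha : ¬ Function.Bijective a.toFun) :
    genGAminusG G a = (genDoubleCoset G a : Set (Transf (Fin n))) := by
  ext u
  constructor
  · rintro ⟨hu, hnot⟩
    exact (mem_or_mem_of_mem_genGA hu).resolve_left hnot
  · intro hu
    refine ⟨genDoubleCoset_le_genGA hu, ?_⟩
    rintro ⟨g, _, rfl⟩
    exact ofPerm_notMem_genDoubleCoset ha g hu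

end

theorem stmt19 (n : ℕ) (hn : 1 ≤ n) (G : Subgroup (Equiv.Perm (Fin n)))
    (a : Transf (Fin n)) (ha : ¬ Function.Bijective a.toFun)
    (E : Set (Transf (Fin n)))
    (hE : E = {u | u ∈ genGAminusG G a ∧ u * u = u ∧ Transf.rank u = Transf.rank a}) :
    IsIdemGen (genGAminusG G a) ↔
      ∀ g ∈ G, ∀ h ∈ G,
        Transf.ofPerm g * a * Transf.ofPerm h ∈ Subsemigroup.closure E := by
  have hS := genGAminusG_eq (G := G) ha
  subst hE
  constructor
  · intro hgen g hg h hh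
    -- An element of maximal rank in `⟨idempotents⟩` only has factors of maximal rank.
    have key : ∀ u ∈ Subsemigroup.closure {u | u ∈ genGAminusG G a ∧ u * u = u},
        rank u = rank a → u ∈ Subsemigroup.closure
          {u | u ∈ genGAminusG G a ∧ u * u = u ∧ rank u = rank a} := by
      intro u hu
      induction hu using Subsemigroup.closure_induction with
      | mem x hx => exact fun hr => Subsemigroup.subset_closure ⟨hx.1, hx.2, hr⟩
      | mul x y hx hy ihx ihy =>
        intro hr
        have hle : ∀ z ∈ Subsemigroup.closure {u | u ∈ genGAminusG G a ∧ u * u = u},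
            rank z ≤ rank a := by
          intro z hz
          have hz' : z ∈ genGAminusG G a := by
            rw [hgen]
            exact hz
          rw [hS] at hz'
          exact rank_le_of_mem_genDoubleCoset hz'
        exact Subsemigroup.mul_mem _
          (ihx (le_antisymm (hle x hx) (hr ▸ rank_mul_le_left x y)))
          (ihy (le_antisymm (hle y hy) (hr ▸ rank_mul_le_right x y)))
    have hmem : ofPerm g * a * ofPerm h ∈ genGAminusG G a := by
      rw [hS]
      exact Subsemigroup.subset_closure ⟨g, hg, h, hh, rfl⟩
    rw [hgen] at hmem
    exact key _ hmem (rank_sandwich g h a)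
  · intro hmem
    apply Set.Subset.antisymm
    · rw [hS]
      have hle : genDoubleCoset G a ≤
          Subsemigroup.closure {u | u ∈ genGAminusG G a ∧ u * u = u} := by
        refine Subsemigroup.closure_le.2 ?_
        rintro _ ⟨g, hg, h, hh, rfl⟩
        have hsub : {u | u ∈ genGAminusG G a ∧ u * u = u ∧ rank u = rank a} ⊆
            {u | u ∈ genGAminusG G a ∧ u * u = u} := fun u hu => ⟨hu.1, hu.2.1⟩
        exact Subsemigroup.closure_mono hsub (hmem g hg h hh)
      rw [hS] at hle
      exact hle
    · have hle : Subsemigroup.closure {u | u ∈ genGAminusG G a ∧ u * u = u} ≤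
          genDoubleCoset G a := by
        refine Subsemigroup.closure_le.2 ?_
        intro u hu
        rw [← hS]
        exact hu.1
      rw [hS] at hle ⊢
      exact hle
end
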